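/- There exists a constant c > 0 (depending only on ξ and the sequence (x_k)) such that {x_{k,0}·ξ⁶} ≥ c·k^(−2γ⁷) for every integer k ≥ 1. -/

import Mathlib

open Polynomial Filter

noncomputable def gold : ℝ := (1 + Real.sqrt 5) / 2

def Mmat (k : ℕ) : Matrix (Fin 2) (Fin 2) ℤ := !![3, (-1)^k; (-1)^(k+1), 0]

noncomputable def Xnorm (x : ℕ → Matrix (Fin 2) (Fin 2) ℤ) (k : ℕ) : ℝ :=
  max |(x k 0 0 : ℝ)| (max |(x k 0 1 : ℝ)| |(x k 1 1 : ℝ)|)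

def MarkoffSeq (ξ : ℝ) (x : ℕ → Matrix (Fin 2) (Fin 2) ℤ) : Prop :=
  (∀ k, 1 ≤ k → x k 0 1 = x k 1 0) ∧
  (∀ k, 1 ≤ k → (x k).det = 1) ∧
  ∃ c₁ c₂ c₃ : ℝ, 0 < c₁ ∧ 0 < c₂ ∧ 0 < c₃ ∧ ∀ k, 1 ≤ k →
    (c₁ * Xnorm x k ^ gold ≤ Xnorm x (k+1) ∧ Xnorm x (k+1) ≤ c₂ * Xnorm x k ^ gold) ∧
    (|(x k 0 0 : ℝ) * ξ - (x k 0 1 : ℝ)| ≤ c₃ / Xnorm x k ∧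
     |(x k 0 1 : ℝ) * ξ - (x k 1 1 : ℝ)| ≤ c₃ / Xnorm x k) ∧
    (x (k+2) = x (k+1) * Mmat (k+1) * x k ∧ x (k+2) = x k * Mmat k * x (k+1)) ∧
    (Xnorm x k < Xnorm x (k+1) ∧ Xnorm x k < (1 + ξ^2) * |(x k 0 0 : ℝ)|)

def polyNorm (P : Polynomial ℤ) : ℕ := P.support.sup fun i => (P.coeff i).natAbs

noncomputable def distInt (η : ℝ) : ℝ := |η - round η|

noncomputable def ratHeight (α : ℚ) : ℝ := max |(α.num : ℝ)| (α.den : ℝ)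

def IsMinIntPoly (α : ℂ) (P : Polynomial ℤ) : Prop :=
  P ≠ 0 ∧ Polynomial.aeval α P = 0 ∧ P.content = 1 ∧ 0 < P.leadingCoeff ∧
  ∀ Q : Polynomial ℤ, Q ≠ 0 → Polynomial.aeval α Q = 0 → P.degree ≤ Q.degree

noncomputable def Qpoly (x : ℕ → Matrix (Fin 2) (Fin 2) ℤ) (k : ℕ) : Polynomial ℤ :=
  Polynomial.C (x k 0 1 * x (k+1) 1 1 - x k 1 1 * x (k+1) 0 1)
  - Polynomial.C (x k 0 0 * x (k+1) 1 1 - x k 1 1 * x (k+1) 0 0) * Polynomial.X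
  + Polynomial.C (x k 0 0 * x (k+1) 0 1 - x k 0 1 * x (k+1) 0 0) * Polynomial.X ^ 2

theorem distInt_nonneg (y : ℝ) : 0 ≤ distInt y := abs_nonneg _

theorem distInt_le_abs_sub (y : ℝ) (N : ℤ) : distInt y ≤ |y - N| := round_le y N

theorem distInt_le_abs (y : ℝ) : distInt y ≤ |y| := by
  simpa using distInt_le_abs_sub y 0

theorem distInt_add_le (y z : ℝ) : distInt (y + z) ≤ distInt y + distInt z := by
  refine (distInt_le_abs_sub (y + z) (round y + round z)).trans ?_
  have h : y + z - ((round y + round z : ℤ) : ℝ) = (y - round y) + (z - round z) := by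
    push_cast; ring
  rw [h]
  exact abs_add_le _ _

theorem distInt_int_mul_le (N : ℤ) (y : ℝ) : distInt (N * y) ≤ |(N : ℝ)| * distInt y := by
  refine (distInt_le_abs_sub (N * y) (N * round y)).trans (le_of_eq ?_)
  rw [distInt, ← abs_mul]
  congr 1
  push_cast; ring

theorem distInt_neg (y : ℝ) : distInt (-y) = distInt y := by
  have h (z : ℝ) : distInt (-z) ≤ distInt z := by simpa using distInt_int_mul_le (-1) z
  exact le_antisymm (h y) (by simpa using h (-y))

theorem distInt_sub_le (y z : ℝ) : distInt (y - z) ≤ distInt y + distInt z := by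
  rw [sub_eq_add_neg, ← distInt_neg z]
  exact distInt_add_le _ _

theorem distInt_add_int (y : ℝ) (N : ℤ) : distInt (y + N) = distInt y := by
  simp [distInt]

/-- A sequence of symmetric integer matrices `((a, b), (b, c))` of determinant one attached to
the signs `s`, together with the size `X` of its terms. -/
structure MarkoffSystem where
  ξ : ℝ
  a : ℕ → ℤ
  b : ℕ → ℤ
  c : ℕ → ℤ
  s : ℕ → ℤ
  X : ℕ → ℝ
  s_sq' : ∀ n, s n ^ 2 = 1
  s_succ : ∀ n, s (n + 1) = -s n
  det' : ∀ n, a n * c n - b n ^ 2 = 1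
  a_add_two' : ∀ n, a (n + 2) = 3 * a n * a (n + 1) + s n * (b (n + 1) * a n - a (n + 1) * b n)
  ab_succ' : ∀ n, a (n + 1) * b (n + 2) - b (n + 1) * a (n + 2) = s n * a n
  ac_succ' : ∀ n, a (n + 1) * c (n + 2) - b (n + 1) * b (n + 2) = s n * b n
  ba_succ' : ∀ n, b (n + 1) * b (n + 2) - c (n + 1) * a (n + 2) = -3 * a n + s n * b n
  bc_succ' : ∀ n, b (n + 1) * c (n + 2) - c (n + 1) * b (n + 2) = -3 * b n + s n * c n
  ab' : ∀ n, a n * b (n + 2) - b n * a (n + 2) = -s n * a (n + 1)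
  ac' : ∀ n, a n * c (n + 2) - b n * b (n + 2) = -s n * b (n + 1)
  ba' : ∀ n, b n * b (n + 2) - c n * a (n + 2) = -3 * a (n + 1) - s n * b (n + 1)
  bc' : ∀ n, b n * c (n + 2) - c n * b (n + 2) = -3 * b (n + 1) - s n * c (n + 1)
  a_add_three' : ∀ n, a (n + 3) + a n = 3 * a (n + 1) * a (n + 2)
  b_add_three' : ∀ n, b (n + 3) + b n = 3 * a (n + 1) * b (n + 2)
  c_add_three' : ∀ n, c (n + 3) + c n = 3 * a (n + 1) * c (n + 2)
  one_le_X : ∀ n, 1 ≤ X n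
  two_mul_X_le : ∀ n, 2 * X n ≤ X (n + 1)
  exists_X_le : ∃ C, 0 < C ∧ ∀ n, X (n + 2) ≤ C * (X n * X (n + 1))
  exists_le_X : ∃ C, 0 < C ∧ ∀ n, X n * X (n + 1) ≤ C * X (n + 2)
  abs_a_le : ∀ n, |(a n : ℝ)| ≤ X n
  abs_b_le : ∀ n, |(b n : ℝ)| ≤ X n
  abs_c_le : ∀ n, |(c n : ℝ)| ≤ X n
  X_le_a : ∀ n, X n ≤ (1 + ξ ^ 2) * |(a n : ℝ)|
  exists_α_le : ∃ C, 0 ≤ C ∧ ∀ n, |(a n : ℝ) * ξ - b n| ≤ C / X n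
  exists_β_le : ∃ C, 0 ≤ C ∧ ∀ n, |(b n : ℝ) * ξ - c n| ≤ C / X n

namespace MarkoffSystem

variable (S : MarkoffSystem)

def α (n : ℕ) : ℝ := S.a n * S.ξ - S.b n

def β (n : ℕ) : ℝ := S.b n * S.ξ - S.c n

def η (n : ℕ) : ℝ := S.a n * S.ξ ^ 2 - S.c n

/-- `S.Ob p q f` says that `f n` is bounded by a constant times `X n ^ p * X (n + 1) ^ q`. -/
def Ob (p q : ℤ) (f : ℕ → ℝ) : Prop :=
  ∃ C, 0 ≤ C ∧ ∀ n, |f n| ≤ C * (S.X n ^ p * S.X (n + 1) ^ q)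

/-- `S.Near p q f` says that the distance of `f n` to the integers is bounded by a constant times
`X n ^ p * X (n + 1) ^ q`. -/
def Near (p q : ℤ) (f : ℕ → ℝ) : Prop :=
  ∃ C, 0 ≤ C ∧ ∀ n, distInt (f n) ≤ C * (S.X n ^ p * S.X (n + 1) ^ q)

variable {S}

theorem X_pos (n : ℕ) : 0 < S.X n := one_pos.trans_le (S.one_le_X n)

theorem X_le_succ (n : ℕ) : S.X n ≤ S.X (n + 1) := by
  linarith [S.two_mul_X_le n, S.X_pos n]

theorem X_mono : Monotone S.X := monotone_nat_of_le_succ X_le_succ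

theorem X_zpow_mono {p q p' q' : ℤ} (hq : q ≤ q') (hpq : p + q ≤ p' + q') (n : ℕ) :
    S.X n ^ p * S.X (n + 1) ^ q ≤ S.X n ^ p' * S.X (n + 1) ^ q' := by
  have hu := S.X_pos n
  have hv := S.X_pos (n + 1)
  obtain ⟨d, hd⟩ := Int.le.dest hq
  calc S.X n ^ p * S.X (n + 1) ^ q ≤ S.X n ^ (p' + d) * S.X (n + 1) ^ q := by
        gcongr
        · exact S.one_le_X n
        · omega
    _ = S.X n ^ p' * (S.X n ^ d * S.X (n + 1) ^ q) := by
        rw [zpow_add₀ hu.ne', zpow_natCast]; ring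
    _ ≤ S.X n ^ p' * (S.X (n + 1) ^ d * S.X (n + 1) ^ q) := by
        gcongr
        exact X_le_succ n
    _ = S.X n ^ p' * S.X (n + 1) ^ q' := by
        rw [← hd, zpow_add₀ hv.ne' q, zpow_natCast, mul_comm (S.X (n + 1) ^ d)]

theorem zpow_shift (p q : ℤ) :
    ∃ C, 0 ≤ C ∧ ∀ n, S.X (n + 1) ^ p * S.X (n + 2) ^ q ≤
      C * (S.X n ^ q * S.X (n + 1) ^ (p + q)) := by
  have key : ∃ C, 0 ≤ C ∧ ∀ n, S.X (n + 2) ^ q ≤ C * (S.X n * S.X (n + 1)) ^ q := by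
    rcases le_total 0 q with h | h
    · obtain ⟨d, rfl⟩ := Int.eq_ofNat_of_zero_le h
      obtain ⟨C, hC, hX⟩ := S.exists_X_le
      refine ⟨C ^ d, by positivity, fun n => ?_⟩
      have := S.X_pos (n + 2)
      simp only [zpow_natCast]
      rw [← mul_pow]
      gcongr
      exact hX n
    · obtain ⟨d, hd⟩ := Int.eq_ofNat_of_zero_le (neg_nonneg.2 h)
      obtain ⟨C, hC, hX⟩ := S.exists_le_X
      refine ⟨C ^ d, by positivity, fun n => ?_⟩
      have h0 := S.X_pos n
      have h1 := S.X_pos (n + 1)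
      have h2 := S.X_pos (n + 2)
      obtain rfl : q = -(d : ℤ) := by omega
      simp only [zpow_neg, zpow_natCast]
      rw [← div_eq_mul_inv, le_div_iff₀ (by positivity), inv_mul_le_iff₀ (by positivity),
        ← mul_pow, mul_comm (S.X (n + 2))]
      exact pow_le_pow_left₀ (by positivity) (hX n) d
  obtain ⟨C, hC, hX⟩ := key
  refine ⟨C, hC, fun n => ?_⟩
  have h1 := S.X_pos (n + 1)
  calc S.X (n + 1) ^ p * S.X (n + 2) ^ q
      ≤ S.X (n + 1) ^ p * (C * (S.X n * S.X (n + 1)) ^ q) := by gcongr; exact hX n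
    _ = C * (S.X n ^ q * S.X (n + 1) ^ (p + q)) := by
        rw [mul_zpow, zpow_add₀ h1.ne']; ring

namespace Ob

variable {p q p' q' : ℤ} {f g : ℕ → ℝ}

theorem congr (h : S.Ob p q f) (hfg : ∀ n, g n = f n) : S.Ob p q g := by
  rwa [show g = f from funext hfg]

theorem mono (h : S.Ob p q f) (hq : q ≤ q' := by decide) (hpq : p + q ≤ p' + q' := by decide) :
    S.Ob p' q' f := by
  obtain ⟨C, hC, h⟩ := h
  exact ⟨C, hC, fun n => (h n).trans (by gcongr ?_ * ?_; exact X_zpow_mono hq hpq n)⟩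

theorem add (hf : S.Ob p q f) (hg : S.Ob p q g) : S.Ob p q fun n => f n + g n := by
  obtain ⟨C, hC, hf⟩ := hf
  obtain ⟨D, hD, hg⟩ := hg
  refine ⟨C + D, by positivity, fun n => (abs_add_le _ _).trans ?_⟩
  rw [add_mul]
  exact add_le_add (hf n) (hg n)

theorem mul (hf : S.Ob p q f) (hg : S.Ob p' q' g) :
    S.Ob (p + p') (q + q') fun n => f n * g n := by
  obtain ⟨C, hC, hf⟩ := hf
  obtain ⟨D, hD, hg⟩ := hg
  refine ⟨C * D, by positivity, fun n => ?_⟩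
  rw [abs_mul, zpow_add₀ (S.X_pos n).ne', zpow_add₀ (S.X_pos (n + 1)).ne']
  calc |f n| * |g n| ≤ _ := mul_le_mul (hf n) (hg n) (abs_nonneg _) ((abs_nonneg _).trans (hf n))
    _ = _ := by ring

theorem const (r : ℝ) : S.Ob 0 0 fun _ => r := ⟨|r|, abs_nonneg _, fun n => by simp⟩

theorem const_mul (r : ℝ) (h : S.Ob p q f) : S.Ob p q fun n => r * f n := by
  simpa using (const r).mul h

theorem sub (hf : S.Ob p q f) (hg : S.Ob p q g) : S.Ob p q fun n => f n - g n :=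
  (hf.add (hg.const_mul (-1))).congr fun n => by ring

theorem shift (h : S.Ob p q f) : S.Ob q (p + q) fun n => f (n + 1) := by
  obtain ⟨C, hC, h⟩ := h
  obtain ⟨D, hD, hX⟩ := S.zpow_shift p q
  refine ⟨C * D, by positivity, fun n => (h (n + 1)).trans ?_⟩
  rw [mul_assoc]
  exact mul_le_mul_of_nonneg_left (hX n) hC

end Ob

namespace Near

variable {p q p' q' : ℤ} {f g : ℕ → ℝ}

theorem congr (h : S.Near p q f) (hfg : ∀ n, g n = f n) : S.Near p q g := by
  rwa [show g = f from funext hfg]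

theorem of_eq_int_add (N : ℕ → ℤ) (h : S.Ob p q f) (hfg : ∀ n, g n = N n + f n) :
    S.Near p q g := by
  obtain ⟨C, hC, h⟩ := h
  refine ⟨C, hC, fun n => ?_⟩
  rw [hfg, add_comm, distInt_add_int]
  exact (distInt_le_abs _).trans (h n)

theorem of_ob (h : S.Ob p q f) : S.Near p q f :=
  of_eq_int_add (fun _ => 0) h fun n => by simp

theorem mono (h : S.Near p q f) (hq : q ≤ q' := by decide)
    (hpq : p + q ≤ p' + q' := by decide) : S.Near p' q' f := by
  obtain ⟨C, hC, h⟩ := h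
  exact ⟨C, hC, fun n => (h n).trans (by gcongr ?_ * ?_; exact X_zpow_mono hq hpq n)⟩

theorem add (hf : S.Near p q f) (hg : S.Near p q g) : S.Near p q fun n => f n + g n := by
  obtain ⟨C, hC, hf⟩ := hf
  obtain ⟨D, hD, hg⟩ := hg
  refine ⟨C + D, by positivity, fun n => (distInt_add_le _ _).trans ?_⟩
  rw [add_mul]
  exact add_le_add (hf n) (hg n)

theorem int_mul {N : ℕ → ℤ} (hN : S.Ob p q fun n => N n) (hg : S.Near p' q' g) :
    S.Near (p + p') (q + q') fun n => N n * g n := by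
  obtain ⟨C, hC, hf⟩ := hN
  obtain ⟨D, hD, hg⟩ := hg
  refine ⟨C * D, by positivity, fun n => (distInt_int_mul_le _ _).trans ?_⟩
  rw [zpow_add₀ (S.X_pos n).ne', zpow_add₀ (S.X_pos (n + 1)).ne']
  calc _ ≤ _ := mul_le_mul (hf n) (hg n) (distInt_nonneg _) ((abs_nonneg _).trans (hf n))
    _ = _ := by ring

theorem const_mul (N : ℤ) (h : S.Near p q f) : S.Near p q fun n => N * f n := by
  simpa using (int_mul (N := fun _ => N) (Ob.const N) h)

theorem sub (hf : S.Near p q f) (hg : S.Near p q g) : S.Near p q fun n => f n - g n :=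
  (hf.add (hg.const_mul (-1))).congr fun n => by push_cast; ring

theorem shift (h : S.Near p q f) : S.Near q (p + q) fun n => f (n + 1) := by
  obtain ⟨C, hC, h⟩ := h
  obtain ⟨D, hD, hX⟩ := S.zpow_shift p q
  refine ⟨C * D, by positivity, fun n => (h (n + 1)).trans ?_⟩
  rw [mul_assoc]
  exact mul_le_mul_of_nonneg_left (hX n) hC

end Near

theorem s_sq (n : ℕ) : (S.s n : ℝ) ^ 2 = 1 := mod_cast S.s_sq' n

theorem s_add_one (n : ℕ) : (S.s (n + 1) : ℝ) = -S.s n := mod_cast S.s_succ n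

theorem s_add_two (n : ℕ) : (S.s (n + 2) : ℝ) = S.s n := by
  rw [s_add_one, s_add_one, neg_neg]

theorem s_add_three (n : ℕ) : (S.s (n + 3) : ℝ) = -S.s n := by
  rw [s_add_one, s_add_two]

theorem s_add_four (n : ℕ) : (S.s (n + 4) : ℝ) = S.s n := by
  rw [s_add_two, s_add_two]

theorem det (n : ℕ) : (S.a n * S.c n - S.b n ^ 2 : ℝ) = 1 := mod_cast S.det' n

theorem a_add_two (n : ℕ) : (S.a (n + 2) : ℝ) =
    3 * S.a n * S.a (n + 1) + S.s n * (S.b (n + 1) * S.a n - S.a (n + 1) * S.b n) :=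
  mod_cast S.a_add_two' n

theorem ab_succ (n : ℕ) :
    (S.a (n + 1) * S.b (n + 2) - S.b (n + 1) * S.a (n + 2) : ℝ) = S.s n * S.a n :=
  mod_cast S.ab_succ' n

theorem ac_succ (n : ℕ) :
    (S.a (n + 1) * S.c (n + 2) - S.b (n + 1) * S.b (n + 2) : ℝ) = S.s n * S.b n :=
  mod_cast S.ac_succ' n

theorem ba_succ (n : ℕ) :
    (S.b (n + 1) * S.b (n + 2) - S.c (n + 1) * S.a (n + 2) : ℝ) = -3 * S.a n + S.s n * S.b n :=
  mod_cast S.ba_succ' n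

theorem bc_succ (n : ℕ) :
    (S.b (n + 1) * S.c (n + 2) - S.c (n + 1) * S.b (n + 2) : ℝ) = -3 * S.b n + S.s n * S.c n :=
  mod_cast S.bc_succ' n

theorem ab (n : ℕ) :
    (S.a n * S.b (n + 2) - S.b n * S.a (n + 2) : ℝ) = -S.s n * S.a (n + 1) :=
  mod_cast S.ab' n

theorem ac (n : ℕ) :
    (S.a n * S.c (n + 2) - S.b n * S.b (n + 2) : ℝ) = -S.s n * S.b (n + 1) :=
  mod_cast S.ac' n

theorem ba (n : ℕ) :
    (S.b n * S.b (n + 2) - S.c n * S.a (n + 2) : ℝ) =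
      -3 * S.a (n + 1) - S.s n * S.b (n + 1) :=
  mod_cast S.ba' n

theorem bc (n : ℕ) :
    (S.b n * S.c (n + 2) - S.c n * S.b (n + 2) : ℝ) =
      -3 * S.b (n + 1) - S.s n * S.c (n + 1) :=
  mod_cast S.bc' n

theorem a_add_three (n : ℕ) : (S.a (n + 3) + S.a n : ℝ) = 3 * S.a (n + 1) * S.a (n + 2) :=
  mod_cast S.a_add_three' n

theorem b_add_three (n : ℕ) : (S.b (n + 3) + S.b n : ℝ) = 3 * S.a (n + 1) * S.b (n + 2) :=
  mod_cast S.b_add_three' n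

theorem c_add_three (n : ℕ) : (S.c (n + 3) + S.c n : ℝ) = 3 * S.a (n + 1) * S.c (n + 2) :=
  mod_cast S.c_add_three' n

theorem ab_three (n : ℕ) :
    (S.a n * S.b (n + 3) - S.b n * S.a (n + 3) : ℝ) = -3 * S.s n * S.a (n + 1) ^ 2 := by
  linear_combination S.a n * S.b_add_three n - S.b n * S.a_add_three n +
    3 * S.a (n + 1) * S.ab n

theorem ac_three (n : ℕ) :
    (S.a n * S.c (n + 3) - S.b n * S.b (n + 3) : ℝ) =
      -3 * S.s n * S.a (n + 1) * S.b (n + 1) - 1 := by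
  linear_combination S.a n * S.c_add_three n - S.b n * S.b_add_three n +
    3 * S.a (n + 1) * S.ac n - S.det n

theorem bc_three (n : ℕ) :
    (S.b n * S.c (n + 3) - S.c n * S.b (n + 3) : ℝ) =
      3 * S.a (n + 1) * (-3 * S.b (n + 1) - S.s n * S.c (n + 1)) := by
  linear_combination S.b n * S.c_add_three n - S.c n * S.b_add_three n +
    3 * S.a (n + 1) * S.bc n

theorem markoff (n : ℕ) : (S.a n ^ 2 + S.a (n + 1) ^ 2 + S.a (n + 2) ^ 2 : ℝ) =
    3 * S.a n * S.a (n + 1) * S.a (n + 2) := by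
  linear_combination (-S.s n * S.a n) * S.ab_succ n + S.s n * S.a (n + 1) * S.ab n +
    S.a (n + 2) * S.a_add_two n - (S.a n ^ 2 + S.a (n + 1) ^ 2) * S.s_sq n

theorem a_ne_zero (n : ℕ) : (S.a n : ℝ) ≠ 0 := by
  intro h
  have h1 := S.X_le_a n
  have h2 := S.one_le_X n
  rw [h, abs_zero, mul_zero] at h1
  linarith

/-- The exponent of `X n` in the size of `X (n + j) ^ e`. -/
def expLeft (e : ℤ) (j : ℕ) : ℤ := e * (Nat.fib (j + 1) - Nat.fib j)

/-- The exponent of `X (n + 1)` in the size of `X (n + j) ^ e`. -/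
def expRight (e : ℤ) (j : ℕ) : ℤ := e * Nat.fib j

theorem Ob.shift_add {e : ℤ} {f : ℕ → ℝ} (h : S.Ob e 0 f) (j : ℕ) :
    S.Ob (expLeft e j) (expRight e j) fun n => f (n + j) := by
  induction j with
  | zero => simpa [expLeft, expRight] using h
  | succ j ih =>
    have e1 : expLeft e (j + 1) = expRight e j := by
      rw [expLeft, expRight, Nat.fib_add_two]; push_cast; ring
    have e2 : expRight e (j + 1) = expLeft e j + expRight e j := by
      rw [expLeft, expRight, expRight]; ring
    rw [e1, e2]
    exact ih.shift.congr fun n => by rw [add_right_comm, add_assoc]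

theorem ob_of_abs_le {f : ℕ → ℝ} (h : ∀ n, |f n| ≤ S.X n) : S.Ob 1 0 f :=
  ⟨1, zero_le_one, fun n => by simpa using h n⟩

theorem ob_of_abs_le_div {f : ℕ → ℝ} (h : ∃ C, 0 ≤ C ∧ ∀ n, |f n| ≤ C / S.X n) :
    S.Ob (-1) 0 f := by
  obtain ⟨C, hC, h⟩ := h
  exact ⟨C, hC, fun n => by simpa [div_eq_mul_inv] using h n⟩

theorem ob_a (j : ℕ) :
    S.Ob (expLeft 1 j) (expRight 1 j) fun n => (S.a (n + j) : ℝ) :=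
  (ob_of_abs_le S.abs_a_le).shift_add j

theorem ob_b (j : ℕ) :
    S.Ob (expLeft 1 j) (expRight 1 j) fun n => (S.b (n + j) : ℝ) :=
  (ob_of_abs_le S.abs_b_le).shift_add j

theorem ob_c (j : ℕ) :
    S.Ob (expLeft 1 j) (expRight 1 j) fun n => (S.c (n + j) : ℝ) :=
  (ob_of_abs_le S.abs_c_le).shift_add j

theorem ob_α (j : ℕ) :
    S.Ob (expLeft (-1) j) (expRight (-1) j) fun n => S.α (n + j) :=
  (ob_of_abs_le_div (f := S.α) S.exists_α_le).shift_add j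

theorem ob_β (j : ℕ) :
    S.Ob (expLeft (-1) j) (expRight (-1) j) fun n => S.β (n + j) :=
  (ob_of_abs_le_div (f := S.β) S.exists_β_le).shift_add j

theorem η_eq (n : ℕ) : S.η n = S.ξ * S.α n + S.β n := by
  simp only [η, α, β]; ring

theorem ob_η (j : ℕ) :
    S.Ob (expLeft (-1) j) (expRight (-1) j) fun n => S.η (n + j) :=
  ((((ob_α 0).const_mul S.ξ).add (ob_β 0)).mono (p' := -1) (q' := 0)
    |>.congr η_eq).shift_add j

theorem ob_inv_a (j : ℕ) :
    S.Ob (expLeft (-1) j) (expRight (-1) j) fun n => (S.a (n + j) : ℝ)⁻¹ :=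
  (ob_of_abs_le_div (S := S) (f := fun n => (S.a n : ℝ)⁻¹)
    ⟨1 + S.ξ ^ 2, by positivity, fun n => by
      have h := abs_pos.2 (S.a_ne_zero n)
      rw [abs_inv, inv_le_iff_one_le_mul₀ h, div_mul_eq_mul_div, le_div_iff₀ (S.X_pos n), one_mul]
      exact S.X_le_a n⟩).shift_add j

theorem ob_s : S.Ob 0 0 fun n => (S.s n : ℝ) :=
  ⟨1, zero_le_one, fun n => by
    have h : |(S.s n : ℝ)| = 1 := by
      rw [← sq_eq_sq₀ (abs_nonneg _) zero_le_one, sq_abs, s_sq, one_pow]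
    simp [h]⟩

theorem ob_three_aα_one :
    S.Ob (-2) 0 fun n => 3 * S.a (n + 1) * S.α (n + 1) - S.s n := by
  have h : S.Ob (-2) 0 fun n => 3 * (S.a (n + 1) ^ 2 * S.α (n + 2) * (S.a (n + 2) : ℝ)⁻¹) +
      S.s n * ((S.a n ^ 2 + S.a (n + 1) ^ 2) * ((S.a (n + 2) : ℝ)⁻¹) ^ 2) := by
    simp only [pow_two]
    exact ((((((ob_a 1).mul (ob_a 1)).mul (ob_α 2)).mul (ob_inv_a 2)).const_mul 3).mono).add
      (ob_s.mul (((((ob_a 0).mul (ob_a 0)).mono (p' := 0) (q' := 2)).add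
        ((ob_a 1).mul (ob_a 1)).mono).mul ((ob_inv_a 2).mul (ob_inv_a 2)))).mono
  refine h.congr fun n => ?_
  have h2 := S.a_ne_zero (n + 2)
  simp only [α]
  field_simp
  linear_combination (3 * S.a (n + 1) * S.a (n + 2)) * S.ab_succ n - S.s n * S.markoff n

theorem aβ_eq (n : ℕ) : S.a n * S.β n = S.a n * S.ξ * S.α n - S.α n ^ 2 - 1 := by
  simp only [α, β]
  linear_combination (-1 : ℝ) * S.det n

theorem ob_three_aβ_one :
    S.Ob (-2) 0 fun n => 3 * S.a (n + 1) * S.β (n + 1) - S.s n * S.ξ + 3 := by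
  refine ((ob_three_aα_one.const_mul S.ξ).sub
    (((ob_α 1).mul (ob_α 1)).const_mul 3).mono).congr fun n => ?_
  linear_combination 3 * S.aβ_eq (n + 1)

theorem ob_three_aη_one :
    S.Ob (-2) 0 fun n => 3 * S.a (n + 1) * S.η (n + 1) - 2 * S.s n * S.ξ + 3 := by
  refine ((ob_three_aα_one.const_mul (2 * S.ξ)).sub
    (((ob_α 1).mul (ob_α 1)).const_mul 3).mono).congr fun n => ?_
  linear_combination 3 * S.aβ_eq (n + 1) + 3 * S.a (n + 1) * S.η_eq (n + 1)

theorem ob_three_aα_two :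
    S.Ob 0 (-2) fun n => 3 * S.a (n + 2) * S.α (n + 2) + S.s n :=
  ob_three_aα_one.shift.congr fun n => by rw [s_add_one]; ring

theorem ob_three_aβ_three :
    S.Ob (-2) (-2) fun n => 3 * S.a (n + 3) * S.β (n + 3) - S.s n * S.ξ + 3 :=
  ob_three_aβ_one.shift.shift.congr fun n => by rw [s_add_one, s_add_one]; ring

theorem ob_three_aβ_four :
    S.Ob (-2) (-4) fun n => 3 * S.a (n + 4) * S.β (n + 4) + S.s n * S.ξ + 3 :=
  ob_three_aβ_three.shift.congr fun n => by rw [s_add_one]; ring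

theorem ob_three_aη_four :
    S.Ob (-2) (-4) fun n => 3 * S.a (n + 4) * S.η (n + 4) + 2 * S.s n * S.ξ + 3 :=
  ob_three_aη_one.shift.shift.shift.congr fun n => by
    rw [s_add_one, s_add_one, s_add_one]; ring

theorem Near.s_mul {p q : ℤ} {f : ℕ → ℝ} (h : S.Near p q f) :
    S.Near p q fun n => S.s n * f n := by
  simpa using Near.int_mul ob_s h

/-! ### Products of two consecutive terms -/

theorem near_a_mul_a_cube :
    S.Near (-1) 0 fun n => S.a (n + 1) * S.a (n + 2) * S.ξ ^ 3 := by
  refine Near.of_eq_int_add (fun n => S.b (n + 1) * S.c (n + 2) + S.s n * S.c n)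
    ((((ob_b 1).mul (ob_η 2)).mono.add (((ob_a 1).mul (ob_α 2)).const_mul (S.ξ ^ 2)).mono).add
      (ob_s.mul (ob_η 0)).mono) fun n => ?_
  simp only [α, η, add_zero]
  push_cast
  linear_combination S.ξ ^ 2 * S.ab_succ n

theorem ob_a_mul_a :
    S.Ob (-1) 0 fun n => 2 * (S.c (n + 1) * S.η (n + 2)) + S.η (n + 1) * S.η (n + 2) -
      2 * S.ξ ^ 2 * (S.s n * S.α (n + 0)) :=
  ((((ob_c 1).mul (ob_η 2)).const_mul 2).mono.add ((ob_η 1).mul (ob_η 2)).mono).sub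
    ((ob_s.mul (ob_α 0)).const_mul (2 * S.ξ ^ 2)).mono

theorem near_a_mul_a_pow_four :
    S.Near (-1) 0 fun n => S.a (n + 1) * S.a (n + 2) * S.ξ ^ 4 - 2 * S.s n * S.a n * S.ξ ^ 3 := by
  refine Near.of_eq_int_add (fun n => S.c (n + 1) * S.c (n + 2) - 3 * S.c n)
    (ob_a_mul_a.sub ((ob_η 0).const_mul 3).mono) fun n => ?_
  simp only [α, η, add_zero]
  push_cast
  linear_combination S.ξ ^ 2 * S.ac_succ n + S.ξ ^ 2 * S.ba_succ n

theorem near_a_mul_a_pow_five :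
    S.Near (-1) 0 fun n => S.a (n + 1) * S.a (n + 2) * S.ξ ^ 5 - S.c (n + 1) * S.c (n + 2) * S.ξ -
      2 * S.s n * S.a n * S.ξ ^ 4 + 3 * S.a n * S.ξ ^ 3 := by
  refine Near.of_ob ((ob_a_mul_a.const_mul S.ξ).congr fun n => ?_)
  simp only [α, η, add_zero]
  linear_combination S.ξ ^ 3 * S.ac_succ n + S.ξ ^ 3 * S.ba_succ n

theorem near_a_mul_a_pow_six :
    S.Near (-1) 0 fun n => S.a (n + 1) * S.a (n + 2) * S.ξ ^ 6 -
      S.c (n + 1) * S.c (n + 2) * S.ξ ^ 2 -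
      2 * S.s n * S.a n * S.ξ ^ 5 + 3 * S.a n * S.ξ ^ 4 := by
  refine Near.of_ob ((ob_a_mul_a.const_mul (S.ξ ^ 2)).congr fun n => ?_)
  simp only [α, η, add_zero]
  linear_combination S.ξ ^ 4 * S.ac_succ n + S.ξ ^ 4 * S.ba_succ n

theorem near_add_three_cube :
    S.Near (-1) 0 fun n => (S.a (n + 3) + S.a n) * S.ξ ^ 3 :=
  (near_a_mul_a_cube.const_mul 3).congr fun n => by
    push_cast
    linear_combination S.ξ ^ 3 * S.a_add_three n

theorem near_add_three_pow_four :
    S.Near (-1) 0 fun n => (S.a (n + 3) + S.a n) * S.ξ ^ 4 - 6 * S.s n * S.a n * S.ξ ^ 3 :=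
  (near_a_mul_a_pow_four.const_mul 3).congr fun n => by
    push_cast
    linear_combination S.ξ ^ 4 * S.a_add_three n

theorem near_add_three_pow_five :
    S.Near (-1) 0 fun n => (S.a (n + 3) + S.a n) * S.ξ ^ 5 - 3 * S.c (n + 1) * S.c (n + 2) * S.ξ -
      6 * S.s n * S.a n * S.ξ ^ 4 + 9 * S.a n * S.ξ ^ 3 :=
  (near_a_mul_a_pow_five.const_mul 3).congr fun n => by
    push_cast
    linear_combination S.ξ ^ 5 * S.a_add_three n

theorem near_add_three_pow_six :
    S.Near (-1) 0 fun n => (S.a (n + 3) + S.a n) * S.ξ ^ 6 -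
      3 * S.c (n + 1) * S.c (n + 2) * S.ξ ^ 2 -
      6 * S.s n * S.a n * S.ξ ^ 5 + 9 * S.a n * S.ξ ^ 4 :=
  (near_a_mul_a_pow_six.const_mul 3).congr fun n => by
    push_cast
    linear_combination S.ξ ^ 6 * S.a_add_three n

/-! ### The products `c (n + 1) * c (n + 2)` along steps of length three -/

theorem ob_mul_β_three {Q : ℕ → ℝ} (κ : ℝ) (h : S.Ob 0 0 fun n => Q n - κ * S.a (n + 2) ^ 2) :
    S.Ob (-1) 0 fun n => 3 * Q n * S.β (n + 3) - κ * S.a n * (S.s n * S.ξ - 3) := by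
  have hsq : S.Ob 2 2 fun n => (S.a (n + 2) : ℝ) ^ 2 :=
    ((ob_a 2).mul (ob_a 2)).mono.congr fun n => pow_two _
  have hsq' : S.Ob 0 2 fun n => (S.a (n + 1) : ℝ) ^ 2 :=
    ((ob_a 1).mul (ob_a 1)).mono.congr fun n => pow_two _
  have hQ : S.Ob 2 2 Q := (h.mono.add (hsq.const_mul κ)).congr fun n => by ring
  have hs : S.Ob 0 0 fun n => S.s n * S.ξ - 3 :=
    ((ob_s.const_mul S.ξ).sub (Ob.const 3)).congr fun n => by ring
  refine (((hQ.mul (ob_inv_a 3)).mul ob_three_aβ_three).mono.add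
    ((hs.mul (ob_inv_a 3)).mul ((h.mono (p' := 0) (q' := 2)).sub (hsq'.const_mul κ))).mono).congr
    fun n => ?_
  have h3 := S.a_ne_zero (n + 3)
  field_simp
  linear_combination κ * (S.s n * S.ξ - 3) * S.markoff n -
    κ * (S.s n * S.ξ - 3) * S.a n * S.a_add_three n

theorem ob_bcβ :
    S.Ob (-1) 0 fun n => 3 * (S.b (n + 2) * S.c (n + 2)) * S.β (n + 3) -
      S.s n * S.a n * S.ξ ^ 4 + 3 * S.a n * S.ξ ^ 3 := by
  refine (ob_mul_β_three (Q := fun n => S.b (n + 2) * S.c (n + 2)) (S.ξ ^ 3)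
    ((((((ob_α 2).mul (ob_η 2)).mono).sub (((ob_a 2).mul (ob_η 2)).const_mul S.ξ).mono).sub
      (((ob_a 2).mul (ob_α 2)).const_mul (S.ξ ^ 2)).mono).congr fun n => ?_)).congr
    fun n => by ring
  simp only [α, η]
  ring

theorem ob_cc_bβ :
    S.Ob (-1) 0 fun n => 3 * (S.c (n + 2) * (S.c (n + 2) + S.b (n + 2) * S.ξ)) * S.β (n + 3) -
      2 * S.s n * S.a n * S.ξ ^ 5 + 6 * S.a n * S.ξ ^ 4 := by
  have hδ : S.Ob (-1) (-1) fun n => S.η (n + 2) + S.ξ * S.α (n + 2) :=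
    (ob_η 2).mono.add ((ob_α 2).const_mul S.ξ).mono
  refine (ob_mul_β_three
    (Q := fun n => S.c (n + 2) * (S.c (n + 2) + S.b (n + 2) * S.ξ)) (2 * S.ξ ^ 4)
    (((((ob_η 2).mul hδ).mono.sub (((ob_a 2).mul hδ).const_mul (S.ξ ^ 2)).mono).sub
      (((ob_a 2).mul (ob_η 2)).const_mul (2 * S.ξ ^ 2)).mono).congr fun n => ?_)).congr
    fun n => by ring
  simp only [α, η]
  ring

theorem ob_bc_β_four :
    S.Ob (-1) 0 fun n => 3 * (S.b (n + 3) * S.c (n + 4)) * S.β (n + 4) +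
      S.s n * S.a (n + 3) * S.ξ ^ 4 + 3 * S.a (n + 3) * S.ξ ^ 3 := by
  have h : S.Ob (-2) (-4) fun n => 3 * S.c (n + 4) * S.β (n + 4) +
      S.ξ ^ 2 * (S.s n * S.ξ + 3) :=
    ((ob_three_aβ_four.const_mul (S.ξ ^ 2)).sub
      (((ob_η 4).mul (ob_β 4)).const_mul 3).mono).congr fun n => by simp only [η]; ring
  have hs : S.Ob 0 0 fun n => S.s n * S.ξ + 3 :=
    ((ob_s.const_mul S.ξ).add (Ob.const 3)).congr fun n => by ring
  refine (((ob_b 3).mul h).mono.add (((ob_α 3).mul hs).const_mul (S.ξ ^ 2)).mono).congr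
    fun n => ?_
  simp only [α]
  ring

theorem ob_cc_η_four :
    S.Ob (-1) 0 fun n => 3 * (S.c (n + 3) * S.c (n + 4)) * S.η (n + 4) +
      2 * S.s n * S.a (n + 3) * S.ξ ^ 5 + 3 * S.a (n + 3) * S.ξ ^ 4 := by
  have h : S.Ob (-2) (-4) fun n => 3 * S.c (n + 4) * S.η (n + 4) +
      S.ξ ^ 2 * (2 * S.s n * S.ξ + 3) :=
    ((ob_three_aη_four.const_mul (S.ξ ^ 2)).sub
      (((ob_η 4).mul (ob_η 4)).const_mul 3).mono).congr fun n => by simp only [η]; ring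
  have hs : S.Ob 0 0 fun n => 2 * S.s n * S.ξ + 3 :=
    ((ob_s.const_mul (2 * S.ξ)).add (Ob.const 3)).congr fun n => by ring
  refine (((ob_c 3).mul h).mono.add (((ob_η 3).mul hs).const_mul (S.ξ ^ 2)).mono).congr
    fun n => ?_
  simp only [η]
  ring

theorem bc_two_three (n : ℕ) :
    (S.b (n + 2) * S.c (n + 3) - S.c (n + 2) * S.b (n + 3) : ℝ) =
      -3 * S.b (n + 1) - S.s n * S.c (n + 1) := by
  linear_combination S.bc_succ (n + 1) + S.c (n + 1) * S.s_add_one n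

theorem ob_bc_sign : S.Ob 0 1 fun n => -3 * S.b (n + 1) - S.s n * S.c (n + 1) :=
  ((ob_b 1).const_mul (-3)).mono.sub (ob_s.mul (ob_c 1)).mono

theorem near_acc :
    S.Near (-1) 0 fun n => S.a (n + 2) * S.c (n + 2) * S.c (n + 3) * S.ξ -
      S.a (n + 3) * S.ξ ^ 3 - S.b (n + 2) * S.c (n + 2) * S.β (n + 3) := by
  refine Near.of_eq_int_add (fun n => S.b (n + 2) * S.c (n + 2) * S.c (n + 3) +
      (-3 * S.b (n + 1) - S.s n * S.c (n + 1)) * S.c (n + 2))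
    ((ob_bc_sign.mul (ob_β 2)).mono.sub ((ob_η 3).const_mul S.ξ).mono) fun n => ?_
  simp only [β, η]
  push_cast
  linear_combination S.c (n + 3) * S.ξ * S.det (n + 2) + S.b (n + 2) * S.ξ * S.bc_two_three n

theorem near_acc_sq :
    S.Near (-1) 0 fun n => S.a (n + 2) * S.c (n + 2) * S.c (n + 3) * S.ξ ^ 2 -
      S.a (n + 3) * S.ξ ^ 4 - S.c (n + 2) * (S.c (n + 2) + S.b (n + 2) * S.ξ) * S.β (n + 3) +
      2 * S.s n * S.c (n + 1) * S.c (n + 2) * S.ξ + 6 * S.s n * S.a n * S.ξ ^ 3 := by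
  refine Near.of_eq_int_add (fun n => S.c (n + 2) ^ 2 * S.c (n + 3) -
      6 * S.c (n + 1) * S.c (n + 2) + 18 * S.c n)
    ((((((ob_bc_sign.mul (ob_β 2)).const_mul S.ξ).mono.sub
      ((ob_η 3).const_mul (S.ξ ^ 2)).mono).sub (((ob_c 1).mul (ob_β 2)).const_mul 6).mono).add
      ((ob_β 0).const_mul 18).mono).add ((ob_s.mul (ob_η 0)).const_mul (6 * S.ξ)).mono)
    fun n => ?_
  simp only [β, η, add_zero]
  push_cast
  linear_combination S.c (n + 3) * S.ξ ^ 2 * S.det (n + 2) +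
    (S.c (n + 2) + S.b (n + 2) * S.ξ) * S.ξ * S.bc_two_three n - 6 * S.ξ * S.bc_succ n

theorem near_acc' :
    S.Near (-1) 0 fun n => S.a (n + 3) * S.c (n + 4) ^ 2 * S.ξ + S.a (n + 3) * S.ξ ^ 3 -
      S.b (n + 3) * S.c (n + 4) * S.β (n + 4) := by
  refine Near.of_eq_int_add (fun n => S.b (n + 3) * S.c (n + 4) ^ 2 +
      S.s n * S.c (n + 2) * S.c (n + 4) - 3 * S.s n * S.c (n + 3))
    (((ob_s.mul ((ob_c 2).mul (ob_β 4))).mono.sub ((ob_s.mul (ob_β 3)).const_mul 3).mono).add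
      ((ob_η 3).const_mul S.ξ).mono) fun n => ?_
  simp only [β, η]
  push_cast
  linear_combination S.c (n + 4) * S.ξ * S.ac_succ (n + 2) + S.s n * S.ξ * S.bc (n + 2) -
    S.c (n + 3) * S.ξ * S.s_sq n +
    (S.c (n + 4) * S.ξ * S.b (n + 2) - S.s n * S.ξ * S.c (n + 3)) * S.s_add_two n

theorem near_acc_sq' :
    S.Near (-1) 0 fun n => S.a (n + 3) * S.c (n + 4) ^ 2 * S.ξ ^ 2 + 2 * S.a (n + 3) * S.ξ ^ 4 -
      S.c (n + 3) * S.c (n + 4) * S.η (n + 4) - 2 * S.s n * S.c (n + 2) * S.c (n + 4) * S.ξ := by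
  refine Near.of_eq_int_add (fun n => S.c (n + 3) * S.c (n + 4) ^ 2 -
      3 * S.c (n + 2) * S.c (n + 4) + 9 * S.c (n + 3))
    (((((ob_s.mul ((ob_c 2).mul (ob_β 4))).const_mul (2 * S.ξ)).mono.add
      ((ob_η 3).const_mul (2 * S.ξ ^ 2)).mono).sub
      (((ob_c 2).mul (ob_η 4)).const_mul 3).mono).add ((ob_η 3).const_mul 9).mono) fun n => ?_
  simp only [β, η]
  push_cast
  have hac : (S.a (n + 3) * S.c (n + 4) - S.b (n + 3) * S.b (n + 4) : ℝ) =
      S.s n * S.b (n + 2) := by rw [← s_add_two]; exact S.ac_succ (n + 2)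
  have hba : (S.b (n + 3) * S.b (n + 4) - S.c (n + 3) * S.a (n + 4) : ℝ) =
      -3 * S.a (n + 2) + S.s n * S.b (n + 2) := by rw [← s_add_two]; exact S.ba_succ (n + 2)
  have hac' : (S.a (n + 2) * S.c (n + 4) - S.b (n + 2) * S.b (n + 4) : ℝ) =
      -S.s n * S.b (n + 3) := by rw [← s_add_two]; exact S.ac (n + 2)
  have hba' : (S.b (n + 2) * S.b (n + 4) - S.c (n + 2) * S.a (n + 4) : ℝ) =
      -3 * S.a (n + 3) - S.s n * S.b (n + 3) := by rw [← s_add_two]; exact S.ba (n + 2)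
  have hbc' : (S.b (n + 2) * S.c (n + 4) - S.c (n + 2) * S.b (n + 4) : ℝ) =
      -3 * S.b (n + 3) - S.s n * S.c (n + 3) := by rw [← s_add_two]; exact S.bc (n + 2)
  linear_combination S.c (n + 4) * S.ξ ^ 2 * (hac + hba) - 3 * S.ξ ^ 2 * (hac' + hba') +
    2 * S.s n * S.ξ ^ 2 * hbc' - 2 * S.c (n + 3) * S.ξ ^ 2 * S.s_sq n

theorem cc_sub_cc (n : ℕ) :
    (S.c (n + 4) * S.c (n + 5) - S.c (n + 1) * S.c (n + 2) : ℝ) =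
      3 * S.a (n + 3) * S.c (n + 4) ^ 2 - 3 * S.a (n + 2) * S.c (n + 2) * S.c (n + 3) := by
  linear_combination S.c (n + 4) * S.c_add_three (n + 2) - S.c (n + 2) * S.c_add_three (n + 1)

theorem near_cc_step :
    S.Near (-1) 0 fun n => S.c (n + 4) * S.c (n + 5) * S.ξ - S.c (n + 1) * S.c (n + 2) * S.ξ -
      6 * S.a n * S.ξ ^ 3 := by
  refine ((((((near_acc'.const_mul 3).sub (near_acc.const_mul 3)).add
    (Near.of_ob ob_bc_β_four)).sub (Near.of_ob ob_bcβ)).sub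
    (near_add_three_cube.const_mul 9)).sub near_add_three_pow_four.s_mul).congr fun n => ?_
  push_cast
  linear_combination S.ξ * S.cc_sub_cc n - 6 * S.a n * S.ξ ^ 3 * S.s_sq n

theorem near_cc_sq_step :
    S.Near (-1) 0 fun n => S.c (n + 4) * S.c (n + 5) * S.ξ ^ 2 -
      S.c (n + 1) * S.c (n + 2) * S.ξ ^ 2 + 72 * S.s n * S.a n * S.ξ ^ 3 -
      12 * S.a n * S.ξ ^ 4 + 6 * S.s n * S.c (n + 1) * S.c (n + 2) * S.ξ := by
  refine (((((((((near_acc_sq'.const_mul 3).sub (near_acc_sq.const_mul 3)).add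
    (near_acc.s_mul.const_mul 18)).add (Near.of_ob ob_cc_η_four)).add
    ((Near.of_ob ob_bcβ).s_mul.const_mul 6)).sub (Near.of_ob ob_cc_bβ)).sub
    (near_add_three_pow_five.s_mul.const_mul 2)).sub (near_add_three_pow_four.const_mul 12)).add
    (near_add_three_cube.s_mul.const_mul 18)).congr fun n => ?_
  push_cast
  linear_combination S.ξ ^ 2 * S.cc_sub_cc n +
    6 * S.s n * S.c (n + 2) * S.ξ * S.c_add_three (n + 1) +
    6 * S.a n * S.ξ ^ 4 * S.s_sq n - 12 * S.a n * S.ξ ^ 4 * S.s_sq n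

/-! ### Steps of length six -/

/-- The increment modulo one of `a n * ξ ^ 6` along steps of length six. -/
noncomputable def drift (S : MarkoffSystem) (n : ℕ) : ℝ :=
  -216 * S.s n * S.a n * S.ξ ^ 3 + 18 * S.a n * S.ξ ^ 4 -
    36 * S.s n * S.c (n + 1) * S.c (n + 2) * S.ξ

/-- The residue modulo one of `a (n + 1) ^ 2 * a (n + 3) * ξ ^ 6`. -/
noncomputable def residue (S : MarkoffSystem) (n : ℕ) : ℝ :=
  4 * S.s n * S.c (n + 1) * S.c (n + 2) * S.ξ - 12 * S.s n * S.a n * S.ξ ^ 3 +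
    4 * S.a n * S.ξ ^ 4

theorem near_pow_six_step :
    S.Near (-1) 0 fun n => S.a (n + 6) * S.ξ ^ 6 - S.a n * S.ξ ^ 6 - S.drift n := by
  refine (((((near_add_three_pow_six.shift.shift.shift.mono).sub near_add_three_pow_six).add
    (near_cc_sq_step.const_mul 3)).sub (near_add_three_pow_five.s_mul.const_mul 6)).sub
    (near_add_three_pow_four.const_mul 9)).congr fun n => ?_
  simp only [drift, add_assoc, Nat.reduceAdd, s_add_three]
  push_cast
  linear_combination (-36 * S.a n * S.ξ ^ 4) * S.s_sq n

theorem near_cube_step :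
    S.Near (-1) 0 fun n => S.a (n + 6) * S.ξ ^ 3 - S.a n * S.ξ ^ 3 :=
  (near_add_three_cube.shift.shift.shift.mono.sub near_add_three_cube).congr fun n => by
    ring

theorem near_pow_four_step :
    S.Near (-1) 0 fun n => S.a (n + 6) * S.ξ ^ 4 - S.a n * S.ξ ^ 4 :=
  ((near_add_three_pow_four.shift.shift.shift.mono.sub near_add_three_pow_four).sub
    (near_add_three_cube.s_mul.const_mul 6)).congr fun n => by
    simp only [add_assoc, Nat.reduceAdd, s_add_three]
    push_cast
    ring

theorem near_cc_step_six :
    S.Near (-1) 0 fun n => S.c (n + 7) * S.c (n + 8) * S.ξ - S.c (n + 1) * S.c (n + 2) * S.ξ :=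
  ((near_cc_step.shift.shift.shift.mono.add near_cc_step).add
    (near_add_three_cube.const_mul 6)).congr fun n => by
    simp only [add_assoc, Nat.reduceAdd]
    push_cast
    ring

theorem s_add_six (n : ℕ) : (S.s (n + 6) : ℝ) = S.s n := by
  rw [s_add_two, s_add_four]

theorem near_drift_step : S.Near (-1) 0 fun n => S.drift (n + 6) - S.drift n := by
  refine (((near_cube_step.s_mul.const_mul (-216)).add (near_pow_four_step.const_mul 18)).sub
    (near_cc_step_six.s_mul.const_mul 36)).congr fun n => ?_
  simp only [drift, add_assoc, Nat.reduceAdd, s_add_six]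
  push_cast
  ring

theorem near_residue_step : S.Near (-1) 0 fun n => S.residue (n + 6) - S.residue n := by
  refine (((near_cc_step_six.s_mul.const_mul 4).sub (near_cube_step.s_mul.const_mul 12)).add
    (near_pow_four_step.const_mul 4)).congr fun n => ?_
  simp only [residue, add_assoc, Nat.reduceAdd, s_add_six]
  push_cast
  ring

/-! ### Multiples of the residue -/

theorem near_aa_cube :
    S.Near 0 (-1) fun n => S.a n * S.a (n + 2) * S.ξ ^ 3 := by
  refine Near.of_eq_int_add (fun n => S.b n * S.c (n + 2) - S.s n * S.c (n + 1))
    ((((ob_b 0).mul (ob_η 2)).mono.add (((ob_a 0).mul (ob_α 2)).const_mul (S.ξ ^ 2)).mono).sub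
      (ob_s.mul (ob_η 1)).mono) fun n => ?_
  simp only [α, η, add_zero]
  push_cast
  linear_combination S.ξ ^ 2 * S.ab n

theorem near_aa_pow_four :
    S.Near 0 (-1) fun n => S.a n * S.a (n + 2) * S.ξ ^ 4 +
      2 * S.s n * S.a (n + 1) * S.ξ ^ 3 := by
  refine Near.of_eq_int_add (fun n => S.c n * S.c (n + 2) - 3 * S.c (n + 1))
    (((((ob_c 0).mul (ob_η 2)).mono.add (((ob_a 0).mul (ob_η 2)).const_mul (S.ξ ^ 2)).mono).add
      ((ob_s.mul (ob_α 1)).const_mul (2 * S.ξ ^ 2)).mono).sub ((ob_η 1).const_mul 3).mono)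
    fun n => ?_
  simp only [α, η, add_zero]
  push_cast
  linear_combination S.ξ ^ 2 * S.ac n + S.ξ ^ 2 * S.ba n

theorem near_acc_three_four :
    S.Near 0 (-1) fun n => S.a n * S.c (n + 3) * S.c (n + 4) * S.ξ := by
  have h : S.Near 0 (-1) fun n => S.a n * S.c (n + 3) * S.c (n + 4) * S.ξ +
      (S.a (n + 4) + S.a (n + 1)) * S.ξ ^ 3 := by
    refine Near.of_eq_int_add (fun n => S.b n * S.c (n + 3) * S.c (n + 4) -
        3 * S.b n * S.c (n + 2) + S.s n * S.c n * S.c (n + 2) -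
        3 * S.s n * S.a (n + 1) * S.c (n + 1) * S.c (n + 4) +
        27 * S.s n * S.a (n + 2) * S.b (n + 2) * S.b (n + 1) + 27 * S.a n * S.b (n + 2) -
        9 * S.a (n + 2) * S.c (n + 2) * S.b (n + 1) - 9 * S.s n * S.a n * S.c (n + 2) -
        9 * S.b (n + 1))
      ((((((((((((((ob_b 0).mul (ob_c 3)).mul (ob_β 4)).mono.sub
        (((ob_b 0).mul (ob_β 2)).const_mul 3).mono).add
        (ob_s.mul ((ob_c 0).mul (ob_β 2))).mono).sub
        ((ob_s.mul (ob_β 1)).const_mul 3).mono).add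
        (((ob_η 1).mono.add (ob_η 4).mono).const_mul S.ξ)).sub
        ((ob_s.mul (((ob_a 1).mul (ob_c 1)).mul (ob_β 4))).const_mul 3).mono).add
        ((ob_s.mul ((ob_a 1).mul ob_three_aα_two)).const_mul (9 * S.ξ)).mono).sub
        ((ob_s.mul ((ob_a 1).mul ((ob_α 2).mul (ob_α 2)))).const_mul 27).mono).sub
        ((ob_α 1).const_mul 9).mono).sub
        (((ob_a 1).mul ob_three_aα_two).const_mul (3 * S.ξ ^ 2)).mono).add
        (((ob_a 1).mul ((ob_α 2).mul (ob_η 2))).const_mul 9).mono).add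
        ((ob_s.mul (ob_η 1)).const_mul 3).mono) fun n => ?_
    have hbc : (S.b (n + 3) * S.c (n + 4) - S.c (n + 3) * S.b (n + 4) : ℝ) =
        -3 * S.b (n + 2) + S.s n * S.c (n + 2) := by rw [← s_add_two]; exact S.bc_succ (n + 2)
    have hbc' : (S.b (n + 1) * S.c (n + 4) - S.c (n + 1) * S.b (n + 4) : ℝ) =
        3 * S.a (n + 2) * (-3 * S.b (n + 2) + S.s n * S.c (n + 2)) := by
      have := S.bc_three (n + 1)
      rw [s_add_one] at this
      linear_combination this
    simp only [α, β, η, add_zero]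
    push_cast
    linear_combination S.c (n + 4) * S.ξ * S.ac_three n + S.b n * S.ξ * hbc +
      S.s n * S.ξ * S.bc n - 3 * S.s n * S.a (n + 1) * S.ξ * hbc' +
      (27 * S.s n * S.b (n + 2) - 9 * S.c (n + 2)) * S.ab_succ n +
      (27 * S.a n * S.b (n + 2) - 9 * S.ξ * S.a (n + 1) -
        9 * S.ξ * S.a (n + 1) * S.a (n + 2) * S.c (n + 2) - S.ξ * S.c (n + 1)) * S.s_sq n
  exact (h.sub near_add_three_cube.shift.mono).congr fun n => by ring

theorem near_a_mul_residue :
    S.Near 0 (-1) fun n => S.a n * S.residue (n + 2) + 8 * S.s n * S.a (n + 1) * S.ξ ^ 3 := by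
  refine (((near_acc_three_four.s_mul.const_mul 4).sub (near_aa_cube.s_mul.const_mul 12)).add
    (near_aa_pow_four.const_mul 4)).congr fun n => ?_
  simp only [residue, add_assoc, Nat.reduceAdd, s_add_two]
  push_cast
  ring

theorem near_aa_three_cube :
    S.Near (-1) 0 fun n => S.a n * S.a (n + 3) * S.ξ ^ 3 + 2 * S.ξ := by
  refine Near.of_eq_int_add (fun n => S.b n * S.c (n + 3) - 3 * S.s n * S.b (n + 1) ^ 2)
    (((((ob_b 0).mul (ob_η 3)).mono.add (((ob_a 0).mul (ob_α 3)).const_mul (S.ξ ^ 2)).mono).sub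
      ((ob_s.mul ob_three_aα_one).const_mul (2 * S.ξ)).mono).add
      ((ob_s.mul ((ob_α 1).mul (ob_α 1))).const_mul 3).mono) fun n => ?_
  simp only [α, η, add_zero]
  push_cast
  linear_combination S.ξ ^ 2 * S.ab_three n - 2 * S.ξ * S.s_sq n

theorem near_aa_mul_residue :
    S.Near (-1) 0 fun n => S.a n * S.a (n + 2) * S.residue (n + 4) - S.s n * (16 * S.ξ) := by
  refine ((Near.int_mul (N := S.a) (ob_a 0) near_a_mul_residue.shift.shift).mono.sub
    (near_aa_three_cube.s_mul.const_mul 8)).congr fun n => ?_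
  simp only [add_assoc, Nat.reduceAdd, s_add_two]
  push_cast
  ring

theorem near_sq_mul_drift :
    S.Near (-1) 0 fun n => S.a (n + 1) ^ 2 * S.drift (n + 3) := by
  have h : S.Near 1 (-1) fun n => S.a n * (S.a n * S.drift (n + 2)) +
      36 * S.s n * (S.a n * S.a (n + 1) * S.ξ ^ 3) := by
    refine (Near.int_mul (N := S.a) (ob_a 0)
      (((near_aa_cube.s_mul.const_mul (-216)).add (near_aa_pow_four.const_mul 18)).sub
        (near_acc_three_four.s_mul.const_mul 36))).mono.congr fun n => ?_
    simp only [drift, add_assoc, Nat.reduceAdd, s_add_two]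
    push_cast
    ring
  refine (h.shift.mono.add (near_a_mul_a_cube.s_mul.const_mul 36)).congr fun n => ?_
  simp only [add_assoc, Nat.reduceAdd, s_add_one]
  push_cast
  ring

theorem near_sq_mul_pow_six :
    S.Near (-1) 0 fun n => S.a (n + 1) ^ 2 * (S.a (n + 3) * S.ξ ^ 6) - S.residue n := by
  have hstep : S.Ob 0 (-1) fun n => S.a n * S.a (n + 2) * S.ξ ^ 6 +
      2 * S.s n * S.a (n + 1) * S.ξ ^ 5 + 3 * S.a (n + 1) * S.ξ ^ 4 -
      S.c n * S.a (n + 2) * S.ξ ^ 4 := by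
    refine ((((ob_a 0).mul (ob_η 2)).const_mul (S.ξ ^ 4)).mono.add
      ((ob_s.mul (ob_α 1)).const_mul (2 * S.ξ ^ 4)).mono).congr fun n => ?_
    simp only [α, η, add_zero]
    linear_combination S.ξ ^ 4 * S.ac n + S.ξ ^ 4 * S.ba n
  have h : S.Near 1 (-1) fun n => S.a n ^ 2 * (S.a (n + 2) * S.ξ ^ 6) +
      2 * S.s n * (S.a n * S.a (n + 1) * S.ξ ^ 5) + 3 * (S.a n * S.a (n + 1) * S.ξ ^ 4) +
      2 * S.s n * (S.c n * S.c (n + 1) * S.ξ) := by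
    refine (((Near.of_ob ((ob_a 0).mul hstep)).mono.add
      (Near.int_mul (N := S.c) (ob_c 0) near_aa_pow_four).mono).sub
      (Near.of_ob ((ob_s.mul ((ob_c 0).mul (ob_η 1))).const_mul (2 * S.ξ))).mono).congr
      fun n => ?_
    simp only [η, add_zero]
    ring
  refine ((h.shift.mono.add (near_a_mul_a_pow_five.s_mul.const_mul 2)).sub
    (near_a_mul_a_pow_four.const_mul 3)).congr fun n => ?_
  simp only [residue, add_assoc, Nat.reduceAdd, s_add_one]
  push_cast
  linear_combination (4 * S.a n * S.ξ ^ 4) * S.s_sq n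

/-! ### Uniform estimates -/

theorem Near.exists_le_div {f : ℕ → ℝ} (h : S.Near (-1) 0 f) :
    ∃ C, 0 ≤ C ∧ ∀ n, distInt (f n) ≤ C / S.X n := by
  obtain ⟨C, hC, h⟩ := h
  exact ⟨C, hC, fun n => by simpa [div_eq_mul_inv] using h n⟩

theorem Ob.exists_le_div {f : ℕ → ℝ} (h : S.Ob (-1) 0 f) :
    ∃ C, 0 ≤ C ∧ ∀ n, |f n| ≤ C / S.X n := by
  obtain ⟨C, hC, h⟩ := h
  exact ⟨C, hC, fun n => by simpa [div_eq_mul_inv] using h n⟩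

theorem ob_inv_X (j : ℕ) :
    S.Ob (expLeft (-1) j) (expRight (-1) j) fun n => (S.X (n + j))⁻¹ :=
  (ob_of_abs_le_div (S := S) (f := fun n => (S.X n)⁻¹)
    ⟨1, zero_le_one, fun n => by
      rw [abs_of_pos (inv_pos.2 (S.X_pos n)), one_div]⟩).shift_add j

theorem two_pow_le_X (n : ℕ) : (2 : ℝ) ^ n ≤ S.X n := by
  induction n with
  | zero => simpa using S.one_le_X 0
  | succ n ih => rw [pow_succ]; linarith [S.two_mul_X_le n]

variable (S) in
theorem exists_lt_X (r : ℝ) : ∃ n, r < S.X n := by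
  obtain ⟨n, hn⟩ := pow_unbounded_of_one_lt r (one_lt_two (α := ℝ))
  exact ⟨n, hn.trans_le (two_pow_le_X n)⟩

theorem distInt_add_mul_six_sub_le {h : ℕ → ℝ} {C : ℝ} (hC : 0 ≤ C)
    (hstep : ∀ n, distInt (h (n + 6) - h n) ≤ C / S.X n) (n t : ℕ) :
    distInt (h (n + 6 * t) - h n) ≤ 2 * C / S.X n := by
  have key : distInt (h (n + 6 * t) - h n) ≤ 2 * C / S.X n - 2 * C / S.X (n + 6 * t) := by
    induction t with
    | zero => simp [distInt]
    | succ t ih =>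
      have h0 := S.X_pos (n + 6 * t)
      have hX : 2 * S.X (n + 6 * t) ≤ S.X (n + 6 * t + 6) :=
        (S.two_mul_X_le _).trans (X_mono (by omega))
      have hle : 2 * C / S.X (n + 6 * t + 6) ≤ C / S.X (n + 6 * t) := by
        rw [div_le_div_iff₀ (by linarith) h0]
        nlinarith
      have htri := distInt_add_le (h (n + 6 * t + 6) - h (n + 6 * t)) (h (n + 6 * t) - h n)
      rw [sub_add_sub_cancel] at htri
      have htwo : 2 * C / S.X (n + 6 * t) = C / S.X (n + 6 * t) + C / S.X (n + 6 * t) := by ring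
      have := hstep (n + 6 * t)
      rw [mul_add_one, ← add_assoc]
      linarith
  have : 0 ≤ 2 * C / S.X (n + 6 * t) := div_nonneg (by linarith) (S.X_pos _).le
  linarith

variable (S) in
theorem exists_distInt_pow_six_le : ∃ C, 0 ≤ C ∧ ∀ n t : ℕ,
    distInt (S.a (n + 6 * t) * S.ξ ^ 6 - S.a n * S.ξ ^ 6 - t * S.drift n) ≤ t * (C / S.X n) := by
  obtain ⟨C, hC, h⟩ := S.near_pow_six_step.exists_le_div
  obtain ⟨D, hD, h'⟩ := S.near_drift_step.exists_le_div
  refine ⟨C + 2 * D, by positivity, fun n t => ?_⟩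
  induction t with
  | zero => simp [distInt]
  | succ t ih =>
    have h1 := h (n + 6 * t)
    have h2 := distInt_add_mul_six_sub_le hD h' n t
    have h3 : C / S.X (n + 6 * t) ≤ C / S.X n := by
      gcongr
      · exact S.X_pos n
      · exact X_mono (by omega)
    have h4 := distInt_add_le
      (S.a (n + 6 * t + 6) * S.ξ ^ 6 - S.a (n + 6 * t) * S.ξ ^ 6 - S.drift (n + 6 * t))
      (S.drift (n + 6 * t) - S.drift n)
    have h5 := distInt_add_le
      (S.a (n + 6 * t + 6) * S.ξ ^ 6 - S.a (n + 6 * t) * S.ξ ^ 6 - S.drift (n + 6 * t) +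
        (S.drift (n + 6 * t) - S.drift n))
      (S.a (n + 6 * t) * S.ξ ^ 6 - S.a n * S.ξ ^ 6 - t * S.drift n)
    have h6 : (S.a (n + 6 * (t + 1)) * S.ξ ^ 6 - S.a n * S.ξ ^ 6 - (t + 1 : ℕ) * S.drift n : ℝ) =
        S.a (n + 6 * t + 6) * S.ξ ^ 6 - S.a (n + 6 * t) * S.ξ ^ 6 - S.drift (n + 6 * t) +
          (S.drift (n + 6 * t) - S.drift n) +
          (S.a (n + 6 * t) * S.ξ ^ 6 - S.a n * S.ξ ^ 6 - t * S.drift n) := by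
      rw [mul_add_one, ← add_assoc]
      push_cast
      ring
    have h7 : ((t + 1 : ℕ) : ℝ) * ((C + 2 * D) / S.X n) =
        t * ((C + 2 * D) / S.X n) + C / S.X n + 2 * D / S.X n := by
      push_cast
      ring
    rw [h6, h7]
    linarith

variable (S) in
theorem exists_distInt_sub_residue_le : ∃ C, 0 ≤ C ∧ ∀ n t : ℕ,
    distInt ((S.a (n + 1) ^ 2 : ℤ) * (S.a (n + 3 + 6 * t) * S.ξ ^ 6) - S.residue n) ≤
      C * (t + 1) / S.X n := by
  obtain ⟨C, hC, h⟩ := S.exists_distInt_pow_six_le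
  obtain ⟨D, hD, h'⟩ := S.near_sq_mul_drift.exists_le_div
  obtain ⟨E, hE, h''⟩ := S.near_sq_mul_pow_six.exists_le_div
  have hob : S.Ob (-1) 0 fun n => S.a (n + 1) * S.a (n + 1) * (S.X (n + 3))⁻¹ :=
    (((ob_a 1).mul (ob_a 1)).mul (ob_inv_X 3)).mono
  obtain ⟨F, hF, hX⟩ := hob.exists_le_div
  refine ⟨F * C + D + E, by positivity, fun n t => ?_⟩
  have h1 : distInt ((S.a (n + 1) ^ 2 : ℤ) * (S.a (n + 3 + 6 * t) * S.ξ ^ 6 -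
      S.a (n + 3) * S.ξ ^ 6 - t * S.drift (n + 3))) ≤ t * (F * C / S.X n) := by
    refine (distInt_int_mul_le _ _).trans ?_
    have e : |((S.a (n + 1) ^ 2 : ℤ) : ℝ)| * (t * (C / S.X (n + 3))) =
        t * C * |S.a (n + 1) * S.a (n + 1) * (S.X (n + 3))⁻¹| := by
      have h3 := S.X_pos (n + 3)
      rw [abs_mul, abs_of_pos (inv_pos.2 h3)]
      push_cast
      rw [pow_two]
      ring
    calc _ ≤ |((S.a (n + 1) ^ 2 : ℤ) : ℝ)| * (t * (C / S.X (n + 3))) := by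
          gcongr
          exact h (n + 3) t
      _ ≤ t * C * (F / S.X n) := by rw [e]; gcongr; exact hX n
      _ = t * (F * C / S.X n) := by ring
  have h2 : distInt ((t : ℤ) * (S.a (n + 1) ^ 2 * S.drift (n + 3))) ≤ t * (D / S.X n) := by
    refine (distInt_int_mul_le _ _).trans ?_
    rw [Int.cast_natCast, Nat.abs_cast]
    gcongr
    exact h' n
  have h3 := h'' n
  have e : ((S.a (n + 1) ^ 2 : ℤ) * (S.a (n + 3 + 6 * t) * S.ξ ^ 6) - S.residue n : ℝ) =
      (S.a (n + 1) ^ 2 : ℤ) * (S.a (n + 3 + 6 * t) * S.ξ ^ 6 -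
      S.a (n + 3) * S.ξ ^ 6 - t * S.drift (n + 3)) +
      ((t : ℤ) * (S.a (n + 1) ^ 2 * S.drift (n + 3))) +
      (S.a (n + 1) ^ 2 * (S.a (n + 3) * S.ξ ^ 6) - S.residue n) := by
    push_cast
    ring
  rw [e]
  refine ((distInt_add_le _ _).trans (add_le_add (distInt_add_le _ _) le_rfl)).trans ?_
  have h0 := S.X_pos n
  have e' : (F * C + D + E) * (t + 1) / S.X n = t * (F * C / S.X n) + t * (D / S.X n) +
      E / S.X n + (F * C + D + t * E) / S.X n := by ring
  have : 0 ≤ (F * C + D + t * E) / S.X n := by positivity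
  linarith

variable (S) in
theorem exists_distInt_aa_mul_residue_le : ∃ C, 0 ≤ C ∧ ∀ n t : ℕ,
    distInt ((S.a n * S.a (n + 2) : ℤ) * S.residue (n + 4 + 6 * t) - S.s n * (16 * S.ξ)) ≤
      C / S.X n := by
  obtain ⟨C, hC, h⟩ := S.near_aa_mul_residue.exists_le_div
  obtain ⟨D, hD, h'⟩ := S.near_residue_step.exists_le_div
  have hob : S.Ob (-1) 0 fun n => S.a (n + 0) * S.a (n + 2) * (S.X (n + 4))⁻¹ :=
    (((ob_a 0).mul (ob_a 2)).mul (ob_inv_X 4)).mono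
  obtain ⟨F, hF, hX⟩ := hob.exists_le_div
  refine ⟨C + F * (2 * D), by positivity, fun n t => ?_⟩
  have h1 : distInt ((S.a n * S.a (n + 2) : ℤ) *
      (S.residue (n + 4 + 6 * t) - S.residue (n + 4))) ≤ F * (2 * D) / S.X n := by
    refine (distInt_int_mul_le _ _).trans ?_
    calc _ ≤ |((S.a n * S.a (n + 2) : ℤ) : ℝ)| * (2 * D / S.X (n + 4)) := by
          gcongr
          exact distInt_add_mul_six_sub_le hD h' (n + 4) t
      _ = 2 * D * |S.a n * S.a (n + 2) * (S.X (n + 4))⁻¹| := by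
          rw [abs_mul, abs_of_pos (inv_pos.2 (S.X_pos (n + 4)))]
          push_cast
          ring
      _ ≤ 2 * D * (F / S.X n) := by gcongr; exact hX n
      _ = F * (2 * D) / S.X n := by ring
  have e : ((S.a n * S.a (n + 2) : ℤ) * S.residue (n + 4 + 6 * t) - S.s n * (16 * S.ξ) : ℝ) =
      (S.a n * S.a (n + 2) * S.residue (n + 4) - S.s n * (16 * S.ξ)) +
      (S.a n * S.a (n + 2) : ℤ) * (S.residue (n + 4 + 6 * t) - S.residue (n + 4)) := by
    push_cast
    ring
  rw [e, add_div]
  exact (distInt_add_le _ _).trans (add_le_add (h n) h1)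

/-! ### Irrationality and lower bounds -/

theorem distInt_int_mul_ξ_pos {q : ℤ} (hq : q ≠ 0) : 0 < distInt (q * S.ξ) := by
  refine lt_of_le_of_ne (distInt_nonneg _) fun h0 => ?_
  have hz : q * S.ξ = round (q * S.ξ) := sub_eq_zero.1 (abs_eq_zero.1 h0.symm)
  set z := round (q * S.ξ)
  obtain ⟨C, hC, hα⟩ := S.exists_α_le
  obtain ⟨k, hk⟩ := S.exists_lt_X (max ((1 + S.ξ ^ 2) * |(q : ℝ)|) (|(q : ℝ)| * C))
  obtain ⟨hk1, hk2⟩ := max_lt_iff.1 hk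
  have hint : S.a k * z = q * S.b k := by
    have hlt : |((S.a k * z - q * S.b k : ℤ) : ℝ)| < 1 := by
      have e : ((S.a k * z - q * S.b k : ℤ) : ℝ) = q * (S.a k * S.ξ - S.b k) := by
        push_cast
        rw [← hz]
        ring
      rw [e, abs_mul]
      calc |(q : ℝ)| * |S.a k * S.ξ - S.b k| ≤ |(q : ℝ)| * (C / S.X k) := by
            gcongr
            exact hα k
        _ < 1 := by
            rw [← mul_div_assoc, div_lt_one (S.X_pos k)]
            exact hk2
    have : |S.a k * z - q * S.b k| < 1 := by exact_mod_cast hlt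
    exact sub_eq_zero.1 (Int.abs_lt_one_iff.1 this)
  have hcop : IsCoprime (S.a k) (S.b k) :=
    ⟨S.c k, -S.b k, by linear_combination S.det' k⟩
  have hdvd : S.a k ∣ q := hcop.dvd_of_dvd_mul_right ⟨z, hint.symm⟩
  have hle : |S.a k| ≤ |q| := Int.le_of_dvd (abs_pos.2 hq) ((abs_dvd_abs _ _).2 hdvd)
  have hle' : |(S.a k : ℝ)| ≤ |(q : ℝ)| := by exact_mod_cast hle
  have h1 := S.X_le_a k
  have h2 : (1 + S.ξ ^ 2) * |(S.a k : ℝ)| ≤ (1 + S.ξ ^ 2) * |(q : ℝ)| := by gcongr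
  linarith

theorem distInt_s_mul (n : ℕ) (y : ℝ) : distInt (S.s n * y) = distInt y := by
  have h : S.s n = 1 ∨ S.s n = -1 := sq_eq_one_iff.1 (S.s_sq' n)
  rcases h with h | h
  · rw [h, Int.cast_one, one_mul]
  · rw [h, Int.cast_neg, Int.cast_one, neg_one_mul, distInt_neg]

variable (S) in
theorem exists_le_distInt_residue :
    ∃ c, 0 < c ∧ ∃ N, ∀ n, N ≤ n → c ≤ distInt (S.residue n) := by
  obtain ⟨C, hC, h⟩ := S.exists_distInt_aa_mul_residue_le
  have hd : 0 < distInt (16 * S.ξ) := by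
    simpa using S.distInt_int_mul_ξ_pos (q := 16) (by norm_num)
  set d := distInt (16 * S.ξ)
  obtain ⟨N, hN⟩ := S.exists_lt_X (2 * C / d)
  have hB := mul_pos (S.X_pos (N + 6)) (S.X_pos (N + 8))
  refine ⟨d / 2 / (S.X (N + 6) * S.X (N + 8)), by positivity, N + 4, fun n hn => ?_⟩
  obtain ⟨r, t, hr, hr', rfl⟩ : ∃ r t, N ≤ r ∧ r ≤ N + 6 ∧ n = r + 4 + 6 * t :=
    ⟨N + (n - 4 - N) % 6, (n - 4 - N) / 6, by omega, by omega, by omega⟩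
  have h1 := h r t
  have h2 : C / S.X r ≤ d / 2 := by
    have hX : 2 * C / d < S.X r := hN.trans_le (X_mono hr)
    rw [div_lt_iff₀ hd] at hX
    rw [div_le_iff₀ (S.X_pos r)]
    linarith
  have h3 := distInt_sub_le ((S.a r * S.a (r + 2) : ℤ) * S.residue (r + 4 + 6 * t))
    ((S.a r * S.a (r + 2) : ℤ) * S.residue (r + 4 + 6 * t) - S.s r * (16 * S.ξ))
  rw [sub_sub_cancel, distInt_s_mul] at h3
  have h4 := distInt_int_mul_le (S.a r * S.a (r + 2)) (S.residue (r + 4 + 6 * t))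
  have h5 : |((S.a r * S.a (r + 2) : ℤ) : ℝ)| ≤ S.X (N + 6) * S.X (N + 8) := by
    push_cast
    rw [abs_mul]
    exact mul_le_mul ((S.abs_a_le r).trans (X_mono hr'))
      ((S.abs_a_le (r + 2)).trans (X_mono (by omega))) (abs_nonneg _) (S.X_pos _).le
  rw [div_le_iff₀ hB, mul_comm]
  have h6 := mul_le_mul_of_nonneg_right h5 (distInt_nonneg (S.residue (r + 4 + 6 * t)))
  linarith

theorem distInt_int_mul_pow_six_pos {q : ℤ} (hq : q ≠ 0) : 0 < distInt (q * S.ξ ^ 6) := by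
  refine lt_of_le_of_ne (distInt_nonneg _) fun h0 => ?_
  obtain ⟨C, hC, h⟩ := S.near_aa_mul_residue.exists_le_div
  obtain ⟨D, hD, h'⟩ := S.near_sq_mul_pow_six.exists_le_div
  have hob : S.Ob (-1) 0 fun n => S.a (n + 0) * S.a (n + 2) * (S.X (n + 4))⁻¹ :=
    (((ob_a 0).mul (ob_a 2)).mul (ob_inv_X 4)).mono
  obtain ⟨F, hF, hX⟩ := hob.exists_le_div
  have hres (n : ℕ) : distInt (q * S.residue n) ≤ |(q : ℝ)| * (D / S.X n) := by
    have h1 : distInt ((S.a (n + 1) ^ 2 * S.a (n + 3) : ℤ) * (q * S.ξ ^ 6)) ≤ 0 := by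
      refine (distInt_int_mul_le _ _).trans ?_
      rw [← h0, mul_zero]
    have h2 : distInt (q * (S.a (n + 1) ^ 2 * (S.a (n + 3) * S.ξ ^ 6) - S.residue n)) ≤
        |(q : ℝ)| * (D / S.X n) :=
      (distInt_int_mul_le _ _).trans (mul_le_mul_of_nonneg_left (h' n) (abs_nonneg _))
    have h3 := distInt_sub_le ((S.a (n + 1) ^ 2 * S.a (n + 3) : ℤ) * (q * S.ξ ^ 6))
      (q * (S.a (n + 1) ^ 2 * (S.a (n + 3) * S.ξ ^ 6) - S.residue n))
    have e : (((S.a (n + 1) ^ 2 * S.a (n + 3) : ℤ) : ℝ) * (q * S.ξ ^ 6) -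
        q * (S.a (n + 1) ^ 2 * (S.a (n + 3) * S.ξ ^ 6) - S.residue n)) = q * S.residue n := by
      push_cast
      ring
    rw [e] at h3
    linarith
  have hpos : 0 < distInt ((q * 16 : ℤ) * S.ξ) :=
    S.distInt_int_mul_ξ_pos (mul_ne_zero hq (by norm_num))
  set d := distInt ((q * 16 : ℤ) * S.ξ)
  obtain ⟨n, hn⟩ := S.exists_lt_X (|(q : ℝ)| * (F * D + C) / d)
  have h1 : distInt ((S.a n * S.a (n + 2) : ℤ) * (q * S.residue (n + 4))) ≤
      |(q : ℝ)| * (F * D / S.X n) := by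
    refine (distInt_int_mul_le _ _).trans ?_
    calc _ ≤ |((S.a n * S.a (n + 2) : ℤ) : ℝ)| * (|(q : ℝ)| * (D / S.X (n + 4))) := by
          gcongr
          exact hres (n + 4)
      _ = |(q : ℝ)| * D * |S.a n * S.a (n + 2) * (S.X (n + 4))⁻¹| := by
          rw [abs_mul, abs_of_pos (inv_pos.2 (S.X_pos (n + 4)))]
          push_cast
          ring
      _ ≤ |(q : ℝ)| * D * (F / S.X n) := by gcongr; exact hX n
      _ = |(q : ℝ)| * (F * D / S.X n) := by ring
  have h2 : distInt (q * (S.a n * S.a (n + 2) * S.residue (n + 4) - S.s n * (16 * S.ξ))) ≤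
      |(q : ℝ)| * (C / S.X n) :=
    (distInt_int_mul_le _ _).trans (mul_le_mul_of_nonneg_left (h n) (abs_nonneg _))
  have h3 := distInt_sub_le ((S.a n * S.a (n + 2) : ℤ) * (q * S.residue (n + 4)))
    (q * (S.a n * S.a (n + 2) * S.residue (n + 4) - S.s n * (16 * S.ξ)))
  have e : (((S.a n * S.a (n + 2) : ℤ) : ℝ) * (q * S.residue (n + 4)) -
      q * (S.a n * S.a (n + 2) * S.residue (n + 4) - S.s n * (16 * S.ξ))) =
      S.s n * ((q * 16 : ℤ) * S.ξ) := by
    push_cast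
    ring
  rw [e, distInt_s_mul] at h3
  have h0' := S.X_pos n
  rw [div_lt_iff₀ hpos] at hn
  have h4 : d ≤ |(q : ℝ)| * (F * D + C) / S.X n :=
    calc d ≤ |(q : ℝ)| * (F * D / S.X n) + |(q : ℝ)| * (C / S.X n) := by linarith
      _ = _ := by ring
  rw [le_div_iff₀ h0'] at h4
  linarith

variable (S) in
theorem exists_X_add_le {c₂ : ℝ} (hc₂ : 0 < c₂)
    (hX : ∀ n, S.X (n + 1) ≤ c₂ * S.X n ^ gold) (j : ℕ) :
    ∃ C, 0 < C ∧ ∀ n, S.X (n + j) ≤ C * S.X n ^ gold ^ j := by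
  have hg : 0 ≤ gold := by unfold gold; positivity
  induction j with
  | zero => exact ⟨1, one_pos, fun n => by simp⟩
  | succ j ih =>
    obtain ⟨C, hC, h⟩ := ih
    refine ⟨c₂ * C ^ gold, by positivity, fun n => (hX (n + j)).trans ?_⟩
    have h0 := S.X_pos n
    have h1 := S.X_pos (n + j)
    calc c₂ * S.X (n + j) ^ gold ≤ c₂ * (C * S.X n ^ gold ^ j) ^ gold := by
          gcongr
          exact h n
      _ = c₂ * C ^ gold * S.X n ^ gold ^ (j + 1) := by
          rw [Real.mul_rpow hC.le (by positivity), ← Real.rpow_mul h0.le, pow_succ]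
          ring

theorem eventually_mul_le_two_pow (A : ℝ) : ∀ᶠ m : ℕ in atTop, A * (m + 8) ≤ 2 ^ m := by
  have h := (tendsto_pow_const_div_const_pow_of_one_lt 1 (one_lt_two (α := ℝ))).const_mul
    (9 * |A|)
  rw [mul_zero] at h
  filter_upwards [h.eventually_le_const one_pos, eventually_ge_atTop 1] with m hm hm1
  have hm1' : (1 : ℝ) ≤ m := by exact_mod_cast hm1
  have h2 : (0 : ℝ) < 2 ^ m := by positivity
  rw [← mul_div_assoc, div_le_one h2, pow_one] at hm
  calc A * (m + 8) ≤ |A| * (m + 8) := by gcongr; exact le_abs_self A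
    _ ≤ |A| * (9 * m) := by gcongr; linarith
    _ ≤ 2 ^ m := by linarith

variable (S) in
theorem exists_le_distInt_pow_six {c₂ : ℝ} (hc₂ : 0 < c₂)
    (hX : ∀ n, S.X (n + 1) ≤ c₂ * S.X n ^ gold) :
    ∃ c, 0 < c ∧ ∃ K, ∀ k : ℕ, K ≤ k →
      c * (k : ℝ) ^ (-(2 * gold ^ 7)) ≤ distInt (S.a k * S.ξ ^ 6) := by
  obtain ⟨c, hc, N, hN⟩ := S.exists_le_distInt_residue
  obtain ⟨C, hC, h⟩ := S.exists_distInt_sub_residue_le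
  obtain ⟨E, hE, hE'⟩ := S.exists_X_add_le hc₂ hX 7
  have hg : 0 ≤ gold ^ 7 := by unfold gold; positivity
  set A := 2 * C / c + 1 with hA
  have hA0 : 0 < A := by positivity
  obtain ⟨M, hM⟩ := eventually_atTop.1 (eventually_mul_le_two_pow A)
  obtain ⟨K, hK⟩ := exists_nat_gt (S.X N / A)
  refine ⟨c / 2 / (E * A ^ gold ^ 7) ^ 2, by positivity, M + K + 8, fun k hk => ?_⟩
  have hk0 : (0 : ℝ) < k := by exact_mod_cast (by omega : 0 < k)
  have hXN : S.X N < A * k := by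
    have hKk : (K : ℝ) ≤ k := by exact_mod_cast (by omega : K ≤ k)
    rw [div_lt_iff₀ hA0] at hK
    nlinarith
  have hXk : A * k ≤ S.X (k - 8) := by
    have h1 := hM (k - 8) (by omega)
    have h2 : ((k - 8 : ℕ) : ℝ) + 8 = k := by exact_mod_cast (by omega : k - 8 + 8 = k)
    rw [h2] at h1
    exact h1.trans (two_pow_le_X _)
  have hex : ∃ j, A * k ≤ S.X j := ⟨_, hXk⟩
  classical
  obtain ⟨J, hJ⟩ : ∃ J, J = Nat.find hex := ⟨_, rfl⟩
  have hJ1 : A * k ≤ S.X J := hJ ▸ Nat.find_spec hex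
  have hJ2 : J ≤ k - 8 := hJ ▸ Nat.find_min' hex hXk
  have hJ3 : N < J := by
    by_contra hlt
    exact absurd (hJ1.trans (X_mono (not_lt.1 hlt))) (not_le.2 hXN)
  have hJ4 : S.X (J - 1) < A * k :=
    not_le.1 (Nat.find_min hex (m := J - 1) (by omega))
  obtain ⟨n, t, hn1, hn2, rfl⟩ : ∃ n t, J ≤ n ∧ n ≤ J + 5 ∧ k = n + 3 + 6 * t :=
    ⟨J + (k - 3 - J) % 6, (k - 3 - J) / 6, by omega, by omega, by omega⟩
  set k := n + 3 + 6 * t with hkdef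
  have hXn : A * k ≤ S.X n := hJ1.trans (X_mono hn1)
  have h1 : C * (t + 1) / S.X n ≤ c / 2 := by
    have htk : (t + 1 : ℝ) ≤ k := by exact_mod_cast (by omega : t + 1 ≤ k)
    rw [div_le_iff₀ (S.X_pos n)]
    have hAc : C ≤ c / 2 * A := by
      rw [hA, mul_add, ← mul_div_assoc, mul_one]
      have : c / 2 * (2 * C) / c = C := by field_simp
      linarith
    calc C * (t + 1) ≤ c / 2 * A * k := by gcongr
      _ = c / 2 * (A * k) := by ring
      _ ≤ c / 2 * S.X n := by gcongr
  have h2 := hN n (by omega)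
  have h3 := h n t
  have h4 := distInt_sub_le ((S.a (n + 1) ^ 2 : ℤ) * (S.a k * S.ξ ^ 6))
    ((S.a (n + 1) ^ 2 : ℤ) * (S.a k * S.ξ ^ 6) - S.residue n)
  rw [sub_sub_cancel] at h4
  have h5 := distInt_int_mul_le (S.a (n + 1) ^ 2) (S.a k * S.ξ ^ 6)
  have hXle : S.X (n + 1) ≤ E * A ^ gold ^ 7 * (k : ℝ) ^ gold ^ 7 := by
    calc S.X (n + 1) ≤ S.X (J - 1 + 7) := X_mono (by omega)
      _ ≤ E * S.X (J - 1) ^ gold ^ 7 := hE' _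
      _ ≤ E * (A * k) ^ gold ^ 7 := by
          have := S.X_pos (J - 1)
          gcongr
      _ = E * A ^ gold ^ 7 * (k : ℝ) ^ gold ^ 7 := by
          rw [Real.mul_rpow hA0.le hk0.le, mul_assoc]
  have h6 : |((S.a (n + 1) ^ 2 : ℤ) : ℝ)| ≤ (E * A ^ gold ^ 7 * (k : ℝ) ^ gold ^ 7) ^ 2 := by
    push_cast
    rw [abs_pow]
    gcongr
    exact (S.abs_a_le _).trans hXle
  have h7 := mul_le_mul_of_nonneg_right h6 (distInt_nonneg (S.a k * S.ξ ^ 6))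
  have h8 : (k : ℝ) ^ (-(2 * gold ^ 7)) = (((k : ℝ) ^ gold ^ 7) ^ 2)⁻¹ := by
    rw [Real.rpow_neg hk0.le, mul_comm, Real.rpow_mul hk0.le, Real.rpow_two]
  rw [h8, ← div_eq_mul_inv, div_div, ← mul_pow, div_le_iff₀ (by positivity), mul_comm]
  linarith

end MarkoffSystem

namespace MarkoffSeq

/-- Entries of a product `p * ((3, e), (-e, 0)) * r` with `p` of determinant one, after
multiplication by the adjugate of `p`. -/
theorem entries_of_eq_mul {p r z : Matrix (Fin 2) (Fin 2) ℤ} {e : ℤ} {M : Matrix (Fin 2) (Fin 2) ℤ}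
    (hM : M = !![3, e; -e, 0]) (hp : p 0 1 = p 1 0) (hr : r 0 1 = r 1 0) (hz : z 0 1 = z 1 0)
    (hdet : p.det = 1) (h : z = p * M * r) :
    z 0 0 = 3 * p 0 0 * r 0 0 + e * (p 0 0 * r 0 1 - p 0 1 * r 0 0) ∧
    z 0 1 = 3 * p 0 0 * r 0 1 + e * (p 0 0 * r 1 1 - p 0 1 * r 0 1) ∧
    z 1 1 = 3 * p 0 1 * r 0 1 + e * (p 0 1 * r 1 1 - p 1 1 * r 0 1) ∧
    p 0 0 * z 0 1 - p 0 1 * z 0 0 = -e * r 0 0 ∧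
    p 0 0 * z 1 1 - p 0 1 * z 0 1 = -e * r 0 1 ∧
    p 0 1 * z 0 1 - p 1 1 * z 0 0 = -3 * r 0 0 - e * r 0 1 ∧
    p 0 1 * z 1 1 - p 1 1 * z 0 1 = -3 * r 0 1 - e * r 1 1 := by
  have hd : p 0 0 * p 1 1 - p 0 1 * p 0 1 = 1 := by
    rw [Matrix.det_fin_two, ← hp] at hdet
    exact hdet
  have h00 : z 0 0 = 3 * p 0 0 * r 0 0 + e * (p 0 0 * r 0 1 - p 0 1 * r 0 0) := by
    rw [h, hM]; simp [Matrix.mul_apply, Fin.sum_univ_two, ← hr]; ring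
  have h01 : z 0 1 = 3 * p 0 0 * r 0 1 + e * (p 0 0 * r 1 1 - p 0 1 * r 0 1) := by
    rw [h, hM]; simp [Matrix.mul_apply, Fin.sum_univ_two]; ring
  have h10 : z 0 1 = 3 * p 0 1 * r 0 0 + e * (p 0 1 * r 0 1 - p 1 1 * r 0 0) := by
    rw [hz, h, hM]; simp [Matrix.mul_apply, Fin.sum_univ_two, ← hp, ← hr]; ring
  have h11 : z 1 1 = 3 * p 0 1 * r 0 1 + e * (p 0 1 * r 1 1 - p 1 1 * r 0 1) := by
    rw [h, hM]; simp [Matrix.mul_apply, Fin.sum_univ_two, ← hp]; ring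
  refine ⟨h00, h01, h11, ?_, ?_, ?_, ?_⟩
  · linear_combination p 0 0 * h10 - p 0 1 * h00 - e * r 0 0 * hd
  · linear_combination p 0 0 * h11 - p 0 1 * h01 - e * r 0 1 * hd
  · linear_combination p 0 1 * h10 - p 1 1 * h00 - (3 * r 0 0 + e * r 0 1) * hd
  · linear_combination p 0 1 * h11 - p 1 1 * h01 - (3 * r 0 1 + e * r 1 1) * hd

theorem Mmat_eq (k : ℕ) : Mmat k = !![3, (-1) ^ k; -(-1) ^ k, 0] := by
  rw [Mmat, pow_succ, mul_neg_one]

theorem one_lt_gold : 1 < gold := by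
  have h : (1 : ℝ) < Real.sqrt 5 := by
    rw [Real.lt_sqrt] <;> norm_num
  unfold gold
  linarith

theorem gold_mul_sub_one : gold * (gold - 1) = 1 := by
  have h : Real.sqrt 5 ^ 2 = 5 := Real.sq_sqrt (by norm_num)
  unfold gold
  linear_combination h / 4

variable {ξ : ℝ} {x : ℕ → Matrix (Fin 2) (Fin 2) ℤ}

theorem apply_zero_zero_ne_zero (hx : MarkoffSeq ξ x) {k : ℕ} (hk : 1 ≤ k) : x k 0 0 ≠ 0 := by
  obtain ⟨-, -, c₁, c₂, c₃, -, -, -, h⟩ := hx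
  intro h0
  have h1 := (h k hk).2.2.2.2
  rw [h0, Int.cast_zero, abs_zero, mul_zero] at h1
  have h2 : 0 ≤ Xnorm x k := (abs_nonneg _).trans (le_max_left _ _)
  linarith

theorem one_le_Xnorm (hx : MarkoffSeq ξ x) {k : ℕ} (hk : 1 ≤ k) : 1 ≤ Xnorm x k := by
  have h : (1 : ℝ) ≤ |(x k 0 0 : ℝ)| := by
    exact_mod_cast Int.one_le_abs (hx.apply_zero_zero_ne_zero hk)
  exact h.trans (le_max_left _ _)

theorem exists_Xnorm_eq_natCast (x : ℕ → Matrix (Fin 2) (Fin 2) ℤ) (k : ℕ) :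
    ∃ N : ℕ, Xnorm x k = N := by
  refine ⟨max (x k 0 0).natAbs (max (x k 0 1).natAbs (x k 1 1).natAbs), ?_⟩
  simp [Xnorm, Nat.cast_max, Nat.cast_natAbs]

theorem natCast_le_Xnorm (hx : MarkoffSeq ξ x) {k : ℕ} (hk : 1 ≤ k) : (k : ℝ) ≤ Xnorm x k := by
  induction k, hk using Nat.le_induction with
  | base => simpa using hx.one_le_Xnorm le_rfl
  | succ k hk ih =>
    obtain ⟨-, -, c₁, c₂, c₃, -, -, -, h⟩ := hx
    have h1 := (h k hk).2.2.2.1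
    obtain ⟨N, hN⟩ := exists_Xnorm_eq_natCast x k
    obtain ⟨N', hN'⟩ := exists_Xnorm_eq_natCast x (k + 1)
    rw [hN] at ih h1
    rw [hN'] at h1 ⊢
    norm_cast at *
    omega

theorem exists_two_mul_Xnorm_le (hx : MarkoffSeq ξ x) :
    ∃ K : ℕ, 1 ≤ K ∧ ∀ k, K ≤ k → 2 * Xnorm x k ≤ Xnorm x (k + 1) := by
  have hx' := hx
  obtain ⟨-, -, c₁, c₂, c₃, hc₁, -, -, h⟩ := hx'
  have hg : 0 < gold - 1 := by linarith [one_lt_gold]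
  have ht : Tendsto (fun k : ℕ => (k : ℝ) ^ (gold - 1)) atTop atTop :=
    (tendsto_rpow_atTop hg).comp tendsto_natCast_atTop_atTop
  obtain ⟨K, hK⟩ := eventually_atTop.1 (ht.eventually_ge_atTop (2 / c₁))
  refine ⟨max K 1, le_max_right _ _, fun k hk => ?_⟩
  have hk1 : 1 ≤ k := (le_max_right _ _).trans hk
  have hX := hx.one_le_Xnorm hk1
  have h1 : 2 / c₁ ≤ Xnorm x k ^ (gold - 1) :=
    (hK k ((le_max_left _ _).trans hk)).trans
      (Real.rpow_le_rpow (Nat.cast_nonneg k) (hx.natCast_le_Xnorm hk1) hg.le)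
  rw [Real.rpow_sub_one (by positivity), div_le_div_iff₀ hc₁ (by positivity)] at h1
  linarith [(h k hk1).1.1]

theorem exists_Xnorm_add_two_le (hx : MarkoffSeq ξ x) :
    ∃ C, 0 < C ∧ ∀ k, 1 ≤ k → Xnorm x (k + 2) ≤ C * (Xnorm x k * Xnorm x (k + 1)) := by
  have hx' := hx
  obtain ⟨-, -, c₁, c₂, c₃, -, hc₂, -, h⟩ := hx'
  refine ⟨c₂ * c₂ ^ (gold - 1), by positivity, fun k hk => ?_⟩
  have hX := hx.one_le_Xnorm hk
  have hX1 := hx.one_le_Xnorm (k := k + 1) (by omega)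
  have h1 : Xnorm x (k + 1) ^ (gold - 1) ≤ c₂ ^ (gold - 1) * Xnorm x k := by
    calc Xnorm x (k + 1) ^ (gold - 1) ≤ (c₂ * Xnorm x k ^ gold) ^ (gold - 1) :=
          Real.rpow_le_rpow (by linarith) (h k hk).1.2 (by linarith [one_lt_gold])
      _ = c₂ ^ (gold - 1) * Xnorm x k := by
          rw [Real.mul_rpow hc₂.le (by positivity), ← Real.rpow_mul (by linarith),
            gold_mul_sub_one, Real.rpow_one]
  rw [Real.rpow_sub_one (by positivity), div_le_iff₀ (by positivity)] at h1
  calc Xnorm x (k + 2) ≤ c₂ * Xnorm x (k + 1) ^ gold := (h (k + 1) (by omega)).1.2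
    _ ≤ c₂ * (c₂ ^ (gold - 1) * Xnorm x k * Xnorm x (k + 1)) := by gcongr
    _ = _ := by ring

theorem exists_le_Xnorm_add_two (hx : MarkoffSeq ξ x) :
    ∃ C, 0 < C ∧ ∀ k, 1 ≤ k → Xnorm x k * Xnorm x (k + 1) ≤ C * Xnorm x (k + 2) := by
  have hx' := hx
  obtain ⟨-, -, c₁, c₂, c₃, hc₁, -, -, h⟩ := hx'
  have hc : 0 < c₁ * c₁ ^ (gold - 1) := by positivity
  refine ⟨(c₁ * c₁ ^ (gold - 1))⁻¹, by positivity, fun k hk => ?_⟩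
  have hX := hx.one_le_Xnorm hk
  have hX1 := hx.one_le_Xnorm (k := k + 1) (by omega)
  have h1 : c₁ ^ (gold - 1) * Xnorm x k ≤ Xnorm x (k + 1) ^ (gold - 1) := by
    calc c₁ ^ (gold - 1) * Xnorm x k = (c₁ * Xnorm x k ^ gold) ^ (gold - 1) := by
          rw [Real.mul_rpow hc₁.le (by positivity), ← Real.rpow_mul (by linarith),
            gold_mul_sub_one, Real.rpow_one]
      _ ≤ Xnorm x (k + 1) ^ (gold - 1) :=
          Real.rpow_le_rpow (by positivity) (h k hk).1.1 (by linarith [one_lt_gold])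
  rw [Real.rpow_sub_one (x := Xnorm x (k + 1)) (by positivity), le_div_iff₀ (by positivity)] at h1
  rw [← div_eq_inv_mul, le_div_iff₀ hc]
  calc Xnorm x k * Xnorm x (k + 1) * (c₁ * c₁ ^ (gold - 1))
      = c₁ * (c₁ ^ (gold - 1) * Xnorm x k * Xnorm x (k + 1)) := by ring
    _ ≤ c₁ * Xnorm x (k + 1) ^ gold := by gcongr
    _ ≤ Xnorm x (k + 2) := (h (k + 1) (by omega)).1.1

/-- The sequence started at an even index beyond which it at least doubles. -/
theorem exists_markoffSystem (hx : MarkoffSeq ξ x) :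
    ∃ (S : MarkoffSystem) (K : ℕ), 1 ≤ K ∧ S.ξ = ξ ∧ (∀ n, S.a n = x (n + K) 0 0) ∧
      ∀ n, S.X n = Xnorm x (n + K) := by
  obtain ⟨L, hL, hdouble⟩ := hx.exists_two_mul_Xnorm_le
  obtain ⟨C₁, hC₁, hle⟩ := hx.exists_Xnorm_add_two_le
  obtain ⟨C₂, hC₂, hge⟩ := hx.exists_le_Xnorm_add_two
  have hx' := hx
  obtain ⟨hsymm, hdet, c₁, c₂, c₃, -, -, hc₃, h⟩ := hx'
  have hpos (n : ℕ) : 1 ≤ n + 2 * L := by omega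
  have hsign (n : ℕ) : (-1 : ℤ) ^ (n + 2 * L) = (-1) ^ n := by
    rw [pow_add, pow_mul]; norm_num
  have hS (n : ℕ) := hsymm (n + 2 * L) (hpos n)
  have hleft (n : ℕ) := entries_of_eq_mul (Mmat_eq (n + 2 * L)) (hS n)
    (hsymm (n + 2 * L + 1) (by omega)) (hsymm (n + 2 * L + 2) (by omega))
    (hdet (n + 2 * L) (hpos n)) (h _ (hpos n)).2.2.1.2
  have hright (n : ℕ) := entries_of_eq_mul (Mmat_eq (n + 2 * L + 1))
    (hsymm (n + 2 * L + 1) (by omega)) (hS n) (hsymm (n + 2 * L + 2) (by omega))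
    (hdet (n + 2 * L + 1) (by omega)) (h _ (hpos n)).2.2.1.1
  simp only [pow_succ, hsign] at hleft hright
  have e1 (n : ℕ) : n + 1 + 2 * L = n + 2 * L + 1 := by ring
  have e2 (n : ℕ) : n + 2 + 2 * L = n + 2 * L + 2 := by ring
  have e3 (n : ℕ) : n + 3 + 2 * L = n + 2 * L + 3 := by ring
  have hsq (n : ℕ) : ((-1 : ℤ) ^ n) ^ 2 = 1 := by rw [← pow_mul, mul_comm, pow_mul]; norm_num
  refine ⟨{ ξ := ξ
            a := fun n => x (n + 2 * L) 0 0
            b := fun n => x (n + 2 * L) 0 1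
            c := fun n => x (n + 2 * L) 1 1
            s := fun n => (-1) ^ n
            X := fun n => Xnorm x (n + 2 * L)
            s_sq' := hsq
            s_succ := fun n => by ring
            det' := fun n => ?_
            a_add_two' := fun n => ?_
            ab_succ' := fun n => ?_
            ac_succ' := fun n => ?_
            ba_succ' := fun n => ?_
            bc_succ' := fun n => ?_
            ab' := fun n => ?_
            ac' := fun n => ?_
            ba' := fun n => ?_
            bc' := fun n => ?_
            a_add_three' := fun n => ?_
            b_add_three' := fun n => ?_
            c_add_three' := fun n => ?_
            one_le_X := fun n => hx.one_le_Xnorm (hpos n)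
            two_mul_X_le := fun n => ?_
            exists_X_le := ⟨C₁, hC₁, fun n => ?_⟩
            exists_le_X := ⟨C₂, hC₂, fun n => ?_⟩
            abs_a_le := fun n => le_max_left _ _
            abs_b_le := fun n => (le_max_left _ _).trans (le_max_right _ _)
            abs_c_le := fun n => (le_max_right _ _).trans (le_max_right _ _)
            X_le_a := fun n => (h _ (hpos n)).2.2.2.2.le
            exists_α_le := ⟨c₃, hc₃.le, fun n => (h _ (hpos n)).2.1.1⟩
            exists_β_le := ⟨c₃, hc₃.le, fun n => (h _ (hpos n)).2.1.2⟩ },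
    2 * L, by omega, rfl, fun n => rfl, fun n => rfl⟩
  · have hd := hdet _ (hpos n)
    rw [Matrix.det_fin_two, ← hS n] at hd
    linear_combination hd
  · rw [e1 n, e2 n]
    linear_combination (hleft n).1
  · rw [e1 n, e2 n]
    linear_combination (hright n).2.2.2.1
  · rw [e1 n, e2 n]
    linear_combination (hright n).2.2.2.2.1
  · rw [e1 n, e2 n]
    linear_combination (hright n).2.2.2.2.2.1
  · rw [e1 n, e2 n]
    linear_combination (hright n).2.2.2.2.2.2
  · rw [e1 n, e2 n]
    linear_combination (hleft n).2.2.2.1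
  · rw [e1 n, e2 n]
    linear_combination (hleft n).2.2.2.2.1
  · rw [e1 n, e2 n]
    linear_combination (hleft n).2.2.2.2.2.1
  · rw [e1 n, e2 n]
    linear_combination (hleft n).2.2.2.2.2.2
  · have h3 := (hleft (n + 1)).1
    rw [e1 n] at h3
    rw [e1 n, e2 n, e3 n]
    linear_combination h3 - (-1) ^ n * (hright n).2.2.2.1 - x (n + 2 * L) 0 0 * hsq n
  · have h3 := (hleft (n + 1)).2.1
    rw [e1 n] at h3
    rw [e1 n, e2 n, e3 n]
    linear_combination h3 - (-1) ^ n * (hright n).2.2.2.2.1 - x (n + 2 * L) 0 1 * hsq n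
  · have h3 := (hleft (n + 1)).2.2.1
    rw [e1 n] at h3
    rw [e1 n, e2 n, e3 n]
    linear_combination h3 - (-1) ^ n * (hright n).2.2.2.2.2.2 - 3 * (hright n).2.2.2.2.1 -
      x (n + 2 * L) 1 1 * hsq n
  · rw [e1 n]
    exact hdouble _ (by omega)
  · rw [e1 n, e2 n]
    exact hle _ (hpos n)
  · rw [e1 n, e2 n]
    exact hge _ (hpos n)

end MarkoffSeq

theorem stmt19 (ξ : ℝ) (x : ℕ → Matrix (Fin 2) (Fin 2) ℤ) (hx : MarkoffSeq ξ x) :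
    ∃ c : ℝ, 0 < c ∧ ∀ k : ℕ, 1 ≤ k →
      distInt ((x k 0 0 : ℝ) * ξ^6) ≥ c * (k : ℝ) ^ (-(2 * gold^7)) := by
  obtain ⟨S, K, hK, rfl, ha, hX⟩ := hx.exists_markoffSystem
  have hx' := hx
  obtain ⟨-, -, _, c₂, _, -, hc₂, -, h⟩ := hx'
  have hgrowth (n : ℕ) : S.X (n + 1) ≤ c₂ * S.X n ^ gold := by
    rw [hX, hX, Nat.add_right_comm]
    exact (h _ (by omega)).1.2
  obtain ⟨c, hc, L, hL⟩ := S.exists_le_distInt_pow_six hc₂ hgrowth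
  have hg : -(2 * gold ^ 7) ≤ 0 := by
    have := MarkoffSeq.one_lt_gold
    have : 0 < gold := by linarith
    simp only [Left.neg_nonpos_iff]
    positivity
  obtain ⟨d, hd, hd'⟩ : ∃ d : ℝ, 0 < d ∧ ∀ k : ℕ, 1 ≤ k → k < L + K + 1 →
      d ≤ distInt ((x k 0 0 : ℝ) * S.ξ ^ 6) := by
    have hne : (Finset.Ico 1 (L + K + 1)).Nonempty := ⟨1, by simp; omega⟩
    obtain ⟨m, hm, hmin⟩ := Finset.exists_min_image _
      (fun k => distInt ((x k 0 0 : ℝ) * S.ξ ^ 6)) hne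
    exact ⟨_, MarkoffSystem.distInt_int_mul_pow_six_pos
      (hx.apply_zero_zero_ne_zero (Finset.mem_Ico.1 hm).1),
      fun k hk hkL => hmin k (Finset.mem_Ico.2 ⟨hk, hkL⟩)⟩
  refine ⟨min c d, lt_min hc hd, fun k hk => ?_⟩
  have hk' : (1 : ℝ) ≤ k := by exact_mod_cast hk
  have hpow : 0 ≤ (k : ℝ) ^ (-(2 * gold ^ 7)) := by positivity
  rcases lt_or_ge k (L + K + 1) with hlt | hge
  · calc min c d * (k : ℝ) ^ (-(2 * gold ^ 7)) ≤ d * 1 := by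
          gcongr
          · exact min_le_right _ _
          · exact Real.rpow_le_one_of_one_le_of_nonpos hk' hg
      _ ≤ _ := by rw [mul_one]; exact hd' k hk hlt
  · obtain ⟨n, rfl⟩ : ∃ n, k = n + K := ⟨k - K, by omega⟩
    rw [← ha]
    refine le_trans ?_ (hL n (by omega))
    have hn : (0 : ℝ) < n := by
      have : 0 < n := by omega
      exact_mod_cast this
    refine mul_le_mul (min_le_left _ _) ?_ hpow hc.le
    exact Real.rpow_le_rpow_of_nonpos hn (by push_cast; linarith [K.cast_nonneg (α := ℝ)]) hg
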